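/- For any δ > 0 there exists n₀ ∈ ℕ such that for all integers n ≥ n₀ divisible by 3 the following holds. Let F₁, …, F_{n/3} be 3-uniform hypergraphs on a common vertex set of n vertices, each with no isolated vertex. If for each i ∈ [n/3], deg_{F_i}(u) + deg_{F_i}(v) > (2/3 + δ)n² for every pair of vertices u, v adjacent in F_i, then {F₁, …, F_{n/3}} admits a rainbow matching. -/

import Mathlib

/-!
Colours index both the hypergraphs and, after an arbitrary bijection `φ` from `C × Fin 3` to the
vertices, a partition of the vertex set into triples; the triple of colour `c` is *real* if it is an
edge of colour `c`.  A vertex is *large* in a colour if its degree there exceeds half of the bound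
on degree sums, and *small* otherwise.  By the degree condition no edge contains two vertices that
are small in its colour.  The goal is an arrangement with all triples real, and it is found by the
absorption method.

**Near-perfect matching** (`exists_near_perfect`).  In an arrangement maximising the number of real
triples, the number of non-real triples is bounded in terms of `δ` alone.  Consider the pairs
(vertex of a non-real triple, colour of a non-real triple).  If the vertex is large in the
colour, its link has average density above `6/9` between two triples, so it often contains seven of
the nine cells, hence a cyclic transversal (`Shift`).  By averaging, three such pairs share
a transversal of the same two triples, and three new edges replace two triples (`no_three_shifts`).
If most pairs are small, then comparing the link of the small vertex with that of a
neighbour gives, for many pairs of triples, two disjoint cells whose complement contains a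
large vertex (`Switch`).  Doing this six times over three pairs of triples frees three large vertices
which share a transversal of two more triples: nine edges replace eight triples
(`no_three_switches`).

**Absorbers.**  An absorber for a colour `c` and vertices `x₀, x₁, x₂` consists of colours `dᵢ` and
vertices `aᵢ, pᵢ, qᵢ` such that `aᵢpᵢqᵢ` and `xᵢpᵢqᵢ` are edges of colour `dᵢ` and `a₀a₁a₂` is an
edge of colour `c`.  If `a` is large in `d`, the links in `d` of `a` and of any `x` share at least
`3δn²` ordered pairs, because all degrees exceed one third of the maximum.  Since in each
colour two thirds of the vertices are large, a proportion `δ⁶` of all gadgets absorbs a given colour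
and triple (`card_absorbs`).  A derandomised greedy choice (`greedy`) yields a small family of
disjoint gadgets in which each colour and triple has any prescribed constant number of absorbers.
Setting this family aside, the boundedly many non-real triples of a near-perfect matching of the
rest are given distinct absorbers by Hall's theorem (`assemble`).
-/

set_option linter.unusedSectionVars false

namespace RainbowOre
open Finset
open scoped Classical

/-! ### Ore families and patterns in a three by three grid -/

/-- Number of ordered pairs `(v, w)` with `R u v w`: twice the degree of `u` when `R` is the
ordered edge relation of a 3-graph. -/
noncomputable def linkCard {V : Type*} [Fintype V] (R : V → V → V → Prop) (u : V) : ℕ :=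
  #{p : V × V | R u p.1 p.2}

/-- A family of symmetric ternary edge relations, indexed by the colours in `C`, without isolated
vertices and with large degree sums over adjacent pairs.  Degrees are counted by ordered pairs, so
the bound `(2/3 + δ) n²` on sums of degrees is doubled. -/
structure Ore {C V : Type*} [Fintype V] (δ : ℝ) (R : C → V → V → V → Prop) : Prop where
  swap_left : ∀ c u v w, R c u v w → R c v u w
  swap_right : ∀ c u v w, R c u v w → R c u w v
  exists_edge : ∀ c u, ∃ v w, R c u v w
  sum_gt : ∀ c u v w, R c u v w →
    (4 / 3 + 2 * δ) * (Fintype.card V : ℝ) ^ 2 < linkCard (R c) u + linkCard (R c) v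

/-- `u` is large in colour `c` if its degree exceeds half of the bound on degree sums; a vertex
that is not large is called small. -/
def Large {C V : Type*} [Fintype V] (δ : ℝ) (R : C → V → V → V → Prop) (c : C) (u : V) : Prop :=
  (2 / 3 + δ) * (Fintype.card V : ℝ) ^ 2 < linkCard (R c) u

section basic
variable {C V : Type*} [Fintype V] {δ : ℝ} {R : C → V → V → V → Prop}

lemma linkCard_le (S : V → V → V → Prop) (u : V) :
    (linkCard S u : ℝ) ≤ (Fintype.card V : ℝ) ^ 2 := by
  have h : linkCard S u ≤ Fintype.card (V × V) := Finset.card_le_univ _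
  rw [Fintype.card_prod] at h
  calc (linkCard S u : ℝ) ≤ ((Fintype.card V * Fintype.card V : ℕ) : ℝ) := by exact_mod_cast h
    _ = _ := by push_cast; ring

lemma Ore.linkCard_gt (h : Ore δ R) (c : C) (u : V) :
    (1 / 3 + 2 * δ) * (Fintype.card V : ℝ) ^ 2 < linkCard (R c) u := by
  obtain ⟨v, w, hv⟩ := h.exists_edge c u
  have h1 := h.sum_gt c u v w hv
  have h2 := linkCard_le (R c) v
  linarith

lemma Ore.large_of_small (h : Ore δ R) {c : C} {u v w : V} (hr : R c u v w)
    (hu : ¬ Large δ R c u) : Large δ R c v := by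
  have h1 := h.sum_gt c u v w hr
  unfold Large at *
  linarith

end basic

section patterns

lemma card_le_nine (B : Finset (Fin 3 × Fin 3)) : #B ≤ 9 := by
  simpa using Finset.card_le_univ B

/-- Seven of the nine cells of a `3 × 3` grid contain one of the three cyclic transversals. -/
lemma card_le_six_add (B : Finset (Fin 3 × Fin 3)) :
    #B ≤ 6 + 3 * (if ∃ s : Fin 3, ∀ a, (a, a + s) ∈ B then 1 else 0) := by
  split_ifs with h
  · exact card_le_nine B
  · push Not at h
    choose a ha using h
    have hd : Disjoint B (univ.image fun s => (a s, a s + s)) := by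
      rw [Finset.disjoint_right]
      intro x hx
      obtain ⟨s, -, rfl⟩ := mem_image.1 hx
      exact ha s
    have hc : #(univ.image fun s => (a s, a s + s)) = 3 := by
      rw [card_image_of_injective]
      · simp
      · intro s s' hs
        simp only [Prod.mk.injEq] at hs
        have := hs.2
        rw [hs.1] at this
        exact add_left_cancel this
    have := card_le_nine (B ∪ univ.image fun s => (a s, a s + s))
    rw [card_union_of_disjoint hd, hc] at this
    omega

lemma exists_two_matching (B : Finset (Fin 3 × Fin 3)) (hB : 4 ≤ #B) :
    ∃ p ∈ B, ∃ q ∈ B, p.1 ≠ q.1 ∧ p.2 ≠ q.2 := by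
  by_contra hcon
  push Not at hcon
  have row : ∀ a : Fin 3, #(univ.image fun b : Fin 3 => (a, b)) ≤ 3 := fun a =>
    card_image_le.trans (by simp)
  have col : ∀ b : Fin 3, #(univ.image fun a : Fin 3 => (a, b)) ≤ 3 := fun a =>
    card_image_le.trans (by simp)
  by_cases h1 : ∃ p ∈ B, ∃ q ∈ B, p.1 ≠ q.1
  · obtain ⟨p, hp, q, hq, hpq⟩ := h1
    have hsub : B ⊆ univ.image fun a : Fin 3 => (a, p.2) := by
      intro x hx
      have h2 := hcon p hp q hq hpq
      rw [mem_image]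
      refine ⟨x.1, mem_univ _, Prod.ext rfl ?_⟩
      by_cases h3 : x.1 = p.1
      · rw [h2]; exact (hcon x hx q hq (by rw [h3]; exact hpq)).symm
      · exact (hcon x hx p hp h3).symm
    have := (card_le_card hsub).trans (col _)
    omega
  · push Not at h1
    obtain ⟨p, hp⟩ : B.Nonempty := by rw [← card_pos]; omega
    have hsub : B ⊆ univ.image fun b : Fin 3 => (p.1, b) := by
      intro x hx
      rw [mem_image]
      exact ⟨x.2, mem_univ _, Prod.ext (h1 p hp x hx) rfl⟩
    have := (card_le_card hsub).trans (row _)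
    omega

lemma exists_third (a b : Fin 3) : ∃ c, c ≠ a ∧ c ≠ b := by
  revert a b; decide

lemma eq_of_ne {a b c : Fin 3} (hab : a ≠ b) (hca : c ≠ a) (hcb : c ≠ b) (x : Fin 3) :
    x = a ∨ x = b ∨ x = c := by
  revert a b c x; decide

/-- Indices `(a, a', a'', b, b')` describing how two cells of a `3 × 3` grid are matched so that
row `a''` stays free. -/
abbrev Wit := Fin 3 × Fin 3 × Fin 3 × Fin 3 × Fin 3

/-- The cells `(a, b)` and `(a', b')` lie in different rows and columns, and `a''` is the third
row. -/
def Wit.Ok (w : Wit) : Prop :=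
  w.1 ≠ w.2.1 ∧ w.1 ≠ w.2.2.1 ∧ w.2.1 ≠ w.2.2.1 ∧ w.2.2.2.1 ≠ w.2.2.2.2

/-- `w` selects two cells of `B` and leaves free a row outside `I`. -/
def Wit.Fits (w : Wit) (B : Finset (Fin 3 × Fin 3)) (I : Finset (Fin 3)) : Prop :=
  w.Ok ∧ (w.1, w.2.2.2.1) ∈ B ∧ (w.2.1, w.2.2.2.2) ∈ B ∧ w.2.2.1 ∉ I

/-- If `B` avoids the rows `I` and the columns `J` and has more than `3 + |I||J|` cells, then two
cells in general position can be chosen such that the remaining row is outside `I` or the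
remaining column is outside `J`. -/
lemma card_le_three_add (B : Finset (Fin 3 × Fin 3)) (I J : Finset (Fin 3))
    (hI : ∀ p ∈ B, p.1 ∉ I) (hJ : ∀ p ∈ B, p.2 ∉ J) :
    #B ≤ 3 + #I * #J + 6 * (if ∃ w : Wit, w.Fits B I then 1 else 0)
      + 6 * (if ∃ w : Wit, w.Fits (B.image Prod.swap) J then 1 else 0) := by
  have h9 := card_le_nine B
  by_cases h4 : 4 ≤ #B
  swap
  · omega
  obtain ⟨⟨a, b⟩, hp, ⟨a', b'⟩, hq, h1, h2⟩ := exists_two_matching B h4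
  simp only at h1 h2
  obtain ⟨a'', ha, ha'⟩ := exists_third a a'
  obtain ⟨b'', hb, hb'⟩ := exists_third b b'
  by_cases hIa : a'' ∈ I
  swap
  · rw [if_pos ⟨(a, a', a'', b, b'), ⟨h1, ha.symm, ha'.symm, h2⟩, hp, hq, hIa⟩]
    omega
  by_cases hJb : b'' ∈ J
  swap
  · have : ∃ w : Wit, w.Fits (B.image Prod.swap) J :=
      ⟨(b, b', b'', a, a'), ⟨h2, hb.symm, hb'.symm, h1⟩,
        mem_image.2 ⟨_, hp, rfl⟩, mem_image.2 ⟨_, hq, rfl⟩, hJb⟩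
    rw [if_pos this]
    omega
  have hsub : B ⊆ ({a, a'} : Finset (Fin 3)) ×ˢ ({b, b'} : Finset (Fin 3)) := by
    rintro ⟨x, y⟩ hxy
    have hx : x ≠ a'' := fun h => hI _ hxy (by simpa [h] using hIa)
    have hy : y ≠ b'' := fun h => hJ _ hxy (by simpa [h] using hJb)
    rw [mem_product, mem_insert, mem_singleton, mem_insert, mem_singleton]
    constructor
    · rcases eq_of_ne h1 ha ha' x with h | h | h <;> tauto
    · rcases eq_of_ne h2 hb hb' y with h | h | h <;> tauto
  have hc := card_le_card hsub
  rw [card_product] at hc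
  have e1 : #({a, a'} : Finset (Fin 3)) ≤ 2 := card_le_two
  have e2 : #({b, b'} : Finset (Fin 3)) ≤ 2 := card_le_two
  have e3 : 0 < #I := card_pos.2 ⟨_, hIa⟩
  have e4 : 0 < #J := card_pos.2 ⟨_, hJb⟩
  have e5 : 0 < #I * #J := Nat.mul_pos e3 e4
  have e6 := Nat.mul_le_mul e1 e2
  omega

end patterns

/-! ### Averaging, and links in terms of an arrangement into triples -/

section averaging
variable {α β : Type*}

/-- If every `x ∈ X` is related to at least `A` elements of `Y`, some `y` is related to a proportion
`A / B` of `X`. -/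
lemma exists_popular (X : Finset α) (Y : Finset β) (r : α → β → Prop) (A B : ℝ)
    (hY : Y.Nonempty) (hA : 0 ≤ A) (hB : (#Y : ℝ) ≤ B)
    (h : ∀ x ∈ X, A ≤ #{y ∈ Y | r x y}) :
    ∃ y ∈ Y, A * #X ≤ B * #{x ∈ X | r x y} := by
  by_contra hcon
  push Not at hcon
  have hdc : (∑ x ∈ X, #{y ∈ Y | r x y}) = ∑ y ∈ Y, #{x ∈ X | r x y} :=
    sum_card_bipartiteAbove_eq_sum_card_bipartiteBelow r
  have h1 : A * #X ≤ ∑ y ∈ Y, (#{x ∈ X | r x y} : ℝ) := by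
    calc A * #X = ∑ x ∈ X, A := by rw [sum_const, nsmul_eq_mul, mul_comm]
      _ ≤ ∑ x ∈ X, (#{y ∈ Y | r x y} : ℝ) := sum_le_sum h
      _ = _ := by exact_mod_cast hdc
  have h2 : ∑ y ∈ Y, B * (#{x ∈ X | r x y} : ℝ) < ∑ y ∈ Y, A * #X :=
    sum_lt_sum_of_nonempty hY hcon
  rw [← mul_sum, sum_const, nsmul_eq_mul] at h2
  have hB0 : 0 ≤ B := le_trans (Nat.cast_nonneg _) hB
  have h3 : B * (A * #X) ≤ B * ∑ y ∈ Y, (#{x ∈ X | r x y} : ℝ) :=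
    mul_le_mul_of_nonneg_left h1 hB0
  have h4 : (#Y : ℝ) * (A * #X) ≤ B * (A * #X) :=
    mul_le_mul_of_nonneg_right hB (by positivity)
  linarith

/-- If every `x ∈ X` is related to at least `A` elements of `Y`, then many `y` are related to a
proportion `θ` of `X`. -/
lemma many_popular (X : Finset α) (Y : Finset β) (r : α → β → Prop) (A B θ : ℝ)
    (hX : X.Nonempty) (hθ : 0 ≤ θ) (hB : (#Y : ℝ) ≤ B)
    (h : ∀ x ∈ X, A ≤ #{y ∈ Y | r x y}) :
    A - θ * B ≤ #{y ∈ Y | θ * #X ≤ #{x ∈ X | r x y}} := by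
  have hdc : (∑ x ∈ X, #{y ∈ Y | r x y}) = ∑ y ∈ Y, #{x ∈ X | r x y} :=
    sum_card_bipartiteAbove_eq_sum_card_bipartiteBelow r
  have h1 : A * #X ≤ ∑ y ∈ Y, (#{x ∈ X | r x y} : ℝ) := by
    calc A * #X = ∑ x ∈ X, A := by rw [sum_const, nsmul_eq_mul, mul_comm]
      _ ≤ ∑ x ∈ X, (#{y ∈ Y | r x y} : ℝ) := sum_le_sum h
      _ = _ := by exact_mod_cast hdc
  have hX0 : (0 : ℝ) < #X := by exact_mod_cast card_pos.2 hX
  have h2 : ∑ y ∈ Y, (#{x ∈ X | r x y} : ℝ) ≤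
      ∑ y ∈ Y, ((if θ * #X ≤ #{x ∈ X | r x y} then (#X : ℝ) else 0) + θ * #X) := by
    refine sum_le_sum fun y _ => ?_
    have : (#{x ∈ X | r x y} : ℝ) ≤ #X := by exact_mod_cast card_filter_le _ _
    have h0 : 0 ≤ θ * #X := by positivity
    split_ifs with hc
    · linarith
    · push Not at hc; linarith
  rw [sum_add_distrib, ← sum_filter, sum_const, sum_const, nsmul_eq_mul, nsmul_eq_mul] at h2
  have h3 : (#Y : ℝ) * (θ * #X) ≤ B * (θ * #X) :=
    mul_le_mul_of_nonneg_right hB (by positivity)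
  have h4 : (A - θ * B) * #X ≤ #{y ∈ Y | θ * #X ≤ #{x ∈ X | r x y}} * (#X : ℝ) := by
    linarith
  exact le_of_mul_le_mul_right h4 hX0

end averaging

section positions
variable {C V : Type*} [Fintype C] [Fintype V]

/-- The link of `v` between the triples with indices `d` and `d'`, as a set of cells of a `3 × 3`
grid. -/
noncomputable def cells (S : V → V → V → Prop) (φ : C × Fin 3 → V) (v : V) (d d' : C) :
    Finset (Fin 3 × Fin 3) :=
  {p | S v (φ (d, p.1)) (φ (d', p.2))}

lemma mem_cells {S : V → V → V → Prop} {φ : C × Fin 3 → V} {v : V} {d d' : C}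
    {p : Fin 3 × Fin 3} : p ∈ cells S φ v d d' ↔ S v (φ (d, p.1)) (φ (d', p.2)) := by
  simp [cells]

lemma sum_cells (S : V → V → V → Prop) (φ : C × Fin 3 → V) (v : V) :
    ∑ y : C × C, #(cells S φ v y.1 y.2) =
      #{p : (C × Fin 3) × (C × Fin 3) | S v (φ p.1) (φ p.2)} := by
  simp only [cells, card_filter, Fintype.sum_prod_type]
  refine sum_congr rfl fun d _ => ?_
  rw [sum_comm]

/-- The error term accounts for the pairs with a vertex outside the arrangement `φ`. -/
lemma linkCard_le_sum (S : V → V → V → Prop) {φ : C × Fin 3 → V} (hφ : Function.Injective φ)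
    (v : V) : (linkCard S v : ℝ) ≤ ∑ y : C × C, (#(cells S φ v y.1 y.2) : ℝ) +
      2 * (Fintype.card V - 3 * Fintype.card C) * Fintype.card V := by
  set P : Finset V := univ.image φ with hP
  have hPc : #P = 3 * Fintype.card C := by
    rw [hP, card_image_of_injective _ hφ]; simp [mul_comm]
  have hQ : #Pᶜ = Fintype.card V - 3 * Fintype.card C := by rw [card_compl, hPc]
  have hle : 3 * Fintype.card C ≤ Fintype.card V := hPc ▸ card_le_univ _
  have hsub : (univ.filter fun p : V × V => S v p.1 p.2) ⊆
      ((univ.filter fun p : (C × Fin 3) × (C × Fin 3) => S v (φ p.1) (φ p.2)).image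
        fun p => (φ p.1, φ p.2)) ∪ (Pᶜ ×ˢ univ ∪ univ ×ˢ Pᶜ) := by
    rintro ⟨x, y⟩ hxy
    simp only [mem_filter, mem_univ, true_and] at hxy
    by_cases hx : x ∈ P
    · by_cases hy : y ∈ P
      · obtain ⟨p, -, rfl⟩ := mem_image.1 hx
        obtain ⟨q, -, rfl⟩ := mem_image.1 hy
        exact mem_union_left _ (mem_image.2 ⟨(p, q), by simpa using hxy, rfl⟩)
      · simp [hy]
    · simp [hx]
  have h1 := (card_le_card hsub).trans (card_union_le _ _)
  have h2 := card_union_le (Pᶜ ×ˢ (univ : Finset V)) ((univ : Finset V) ×ˢ Pᶜ)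
  rw [card_product, card_product, hQ, card_univ] at h2
  have h3 := card_image_le (s := univ.filter fun p : (C × Fin 3) × (C × Fin 3) =>
    S v (φ p.1) (φ p.2)) (f := fun p => (φ p.1, φ p.2))
  rw [← sum_cells] at h3
  have h4 : linkCard S v ≤ ∑ y : C × C, #(cells S φ v y.1 y.2) +
      ((Fintype.card V - 3 * Fintype.card C) * Fintype.card V +
        Fintype.card V * (Fintype.card V - 3 * Fintype.card C)) := by
    unfold linkCard; omega
  have h5 : (linkCard S v : ℝ) ≤ ((∑ y : C × C, #(cells S φ v y.1 y.2) +
      ((Fintype.card V - 3 * Fintype.card C) * Fintype.card V +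
        Fintype.card V * (Fintype.card V - 3 * Fintype.card C)) : ℕ) : ℝ) := by
    exact_mod_cast h4
  push_cast [Nat.cast_sub hle] at h5
  linarith

/-- Up to an error of `(δ/2) n²`, the link of `v` is counted by the cells between distinct
triples. -/
lemma linkCard_le_offDiag {δ : ℝ} (S : V → V → V → Prop) {φ : C × Fin 3 → V}
    (hφ : Function.Injective φ)
    (hn : 12 ≤ δ * Fintype.card V)
    (hC : (Fintype.card V : ℝ) - 3 * Fintype.card C ≤ δ / 8 * Fintype.card V) (v : V) :
    (linkCard S v : ℝ) ≤ ∑ y ∈ (univ : Finset C).offDiag, (#(cells S φ v y.1 y.2) : ℝ) +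
      δ / 2 * (Fintype.card V : ℝ) ^ 2 := by
  have h1 := linkCard_le_sum S hφ v
  have hle : (3 * Fintype.card C : ℝ) ≤ Fintype.card V := by
    have := Fintype.card_le_of_injective φ hφ
    simp only [Fintype.card_prod, Fintype.card_fin] at this
    exact_mod_cast (by omega : 3 * Fintype.card C ≤ Fintype.card V)
  have h2 : ∑ y : C × C, (#(cells S φ v y.1 y.2) : ℝ) =
      ∑ y ∈ (univ : Finset C).offDiag, (#(cells S φ v y.1 y.2) : ℝ) +
      ∑ y ∈ (univ : Finset C).diag, (#(cells S φ v y.1 y.2) : ℝ) := by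
    rw [← sum_union (disjoint_diag_offDiag _).symm, union_comm, diag_union_offDiag,
      univ_product_univ]
  have h3 : ∑ y ∈ (univ : Finset C).diag, (#(cells S φ v y.1 y.2) : ℝ) ≤
      9 * Fintype.card C := by
    calc _ ≤ ∑ y ∈ (univ : Finset C).diag, (9 : ℝ) :=
          sum_le_sum fun y _ => by exact_mod_cast card_le_nine _
      _ = 9 * Fintype.card C := by
          rw [sum_const, diag_card, card_univ, nsmul_eq_mul, mul_comm]
  have hV : (0 : ℝ) ≤ Fintype.card V := Nat.cast_nonneg _
  have h4 := mul_le_mul_of_nonneg_right hC hV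
  have h5 := mul_le_mul_of_nonneg_right hn hV
  nlinarith

end positions

/-! ### Shifts, switches and augmentation -/

section switches
variable {C V : Type*} [Fintype C] [Fintype V]

/-- The three edges `{v, (d, a), (d', a + s)}`, `a = 0, 1, 2`, between the triples `d ≠ d'` all
have colour `c`; here `z = ((d, d'), s)`. -/
def Shift (R : C → V → V → V → Prop) (φ : C × Fin 3 → V) (c : C) (v : V)
    (z : (C × C) × Fin 3) : Prop :=
  z.1.1 ≠ z.1.2 ∧ ∀ a, R c v (φ (z.1.1, a)) (φ (z.1.2, a + z.2))

/-- Two disjoint pairs between the triples `d ≠ d'` lie in the link of `u` in colour `c`, and the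
remaining vertex of the triple `d` is large in colour `c`; here `z = ((d, d'), w)`. -/
def Switch (δ : ℝ) (R : C → V → V → V → Prop) (φ : C × Fin 3 → V) (c : C) (u : V)
    (z : (C × C) × Wit) : Prop :=
  z.1.1 ≠ z.1.2 ∧ z.2.Ok ∧ R c u (φ (z.1.1, z.2.1)) (φ (z.1.2, z.2.2.2.2.1)) ∧
    R c u (φ (z.1.1, z.2.2.1)) (φ (z.1.2, z.2.2.2.2.2)) ∧ Large δ R c (φ (z.1.1, z.2.2.2.1))

lemma card_offDiag_le {φ : C × Fin 3 → V} (hφ : Function.Injective φ) :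
    (#(univ : Finset C).offDiag : ℝ) ≤ (Fintype.card V : ℝ) ^ 2 / 9 := by
  have hle : (3 * Fintype.card C : ℝ) ≤ Fintype.card V := by
    have := Fintype.card_le_of_injective φ hφ
    simp only [Fintype.card_prod, Fintype.card_fin] at this
    exact_mod_cast (by omega : 3 * Fintype.card C ≤ Fintype.card V)
  have h1 : (#(univ : Finset C).offDiag : ℝ) ≤ (Fintype.card C : ℝ) ^ 2 := by
    have : #(univ : Finset C).offDiag ≤ Fintype.card C * Fintype.card C := by
      rw [offDiag_card, card_univ]; omega
    rw [sq]; exact_mod_cast this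
  nlinarith

/-- A large vertex has average link density above `6/9` between pairs of triples, hence sees many
cyclic transversals. -/
lemma card_shift {δ : ℝ} {R : C → V → V → V → Prop} {φ : C × Fin 3 → V}
    (hφ : Function.Injective φ) (hn : 12 ≤ δ * Fintype.card V)
    (hC : (Fintype.card V : ℝ) - 3 * Fintype.card C ≤ δ / 8 * Fintype.card V)
    {c : C} {v : V} (hv : Large δ R c v) :
    δ / 6 * (Fintype.card V : ℝ) ^ 2 ≤ #{z | Shift R φ c v z} := by
  have h1 := linkCard_le_offDiag (R c) hφ hn hC v
  have h2 := card_offDiag_le hφ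
  set G := (univ : Finset C).offDiag.filter
    (fun y => ∃ s : Fin 3, ∀ a, (a, a + s) ∈ cells (R c) φ v y.1 y.2) with hG
  have h3 : ∑ y ∈ (univ : Finset C).offDiag, (#(cells (R c) φ v y.1 y.2) : ℝ) ≤
      6 * #(univ : Finset C).offDiag + 3 * #G := by
    have : ∑ y ∈ (univ : Finset C).offDiag, #(cells (R c) φ v y.1 y.2) ≤
        6 * #(univ : Finset C).offDiag + 3 * #G := by
      refine (sum_le_sum fun y _ => card_le_six_add _).trans ?_
      rw [sum_add_distrib, ← mul_sum, ← card_filter, sum_const, smul_eq_mul, mul_comm]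
    exact_mod_cast this
  have h4 : G ⊆ (univ.filter fun z => Shift R φ c v z).image Prod.fst := by
    intro y hy
    rw [hG, mem_filter, mem_offDiag] at hy
    obtain ⟨⟨-, -, hne⟩, s, hs⟩ := hy
    exact mem_image.2 ⟨(y, s), by
      simp only [mem_filter, mem_univ, true_and]
      exact ⟨hne, fun a => mem_cells.1 (hs a)⟩, rfl⟩
  have h5 : (#G : ℝ) ≤ #{z | Shift R φ c v z} := by
    exact_mod_cast (card_le_card h4).trans card_image_le
  unfold Large at hv
  linarith

/-- For a small vertex `u` and a neighbour `v` of it, the links of `u` and `v` have total average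
density above `12/9` between pairs of triples.  Since `v` has at most `9 - ij` cells when the two
triples contain `i` and `j` small vertices, `u` has often more than `3 + ij` cells. -/
lemma card_switch {δ : ℝ} {R : C → V → V → V → Prop} (hR : Ore δ R) {φ : C × Fin 3 → V}
    (hφ : Function.Injective φ) (hn : 12 ≤ δ * Fintype.card V)
    (hC : (Fintype.card V : ℝ) - 3 * Fintype.card C ≤ δ / 8 * Fintype.card V)
    {c : C} {u : V} (hu : ¬ Large δ R c u) :
    δ / 12 * (Fintype.card V : ℝ) ^ 2 ≤ #{z | Switch δ R φ c u z} := by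
  obtain ⟨v, w, hvw⟩ := hR.exists_edge c u
  have hsum := hR.sum_gt c u v w hvw
  have h1 := linkCard_le_offDiag (R c) hφ hn hC u
  have h1' := linkCard_le_offDiag (R c) hφ hn hC v
  have h2 := card_offDiag_le hφ
  set O := (univ : Finset C).offDiag with hO
  let I : C → Finset (Fin 3) := fun d => univ.filter fun a => ¬ Large δ R c (φ (d, a))
  let Q : C × C → Prop := fun y => ∃ w : Wit, w.Fits (cells (R c) φ u y.1 y.2) (I y.1)
  have hswap : ∀ d d', (cells (R c) φ u d d').image Prod.swap = cells (R c) φ u d' d := by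
    intro d d'
    ext ⟨a, b⟩
    simp only [mem_image, mem_cells]
    constructor
    · rintro ⟨⟨x, y⟩, hxy, he⟩
      simp only [Prod.swap_prod_mk, Prod.mk.injEq] at he
      obtain ⟨rfl, rfl⟩ := he
      exact hR.swap_right _ _ _ _ hxy
    · intro h
      exact ⟨(b, a), hR.swap_right _ _ _ _ h, rfl⟩
  have hcell : ∀ y : C × C, #(cells (R c) φ u y.1 y.2) + #(cells (R c) φ v y.1 y.2) ≤
      12 + 6 * (if Q y then 1 else 0) + 6 * (if Q y.swap then 1 else 0) := by
    intro y
    have hI : ∀ p ∈ cells (R c) φ u y.1 y.2, p.1 ∉ I y.1 := by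
      intro p hp hpI
      rw [mem_cells] at hp
      exact (mem_filter.1 hpI).2 (hR.large_of_small hp hu)
    have hJ : ∀ p ∈ cells (R c) φ u y.1 y.2, p.2 ∉ I y.2 := by
      intro p hp hpI
      rw [mem_cells] at hp
      exact (mem_filter.1 hpI).2 (hR.large_of_small (hR.swap_right _ _ _ _ hp) hu)
    have ha := card_le_three_add _ _ _ hI hJ
    rw [hswap] at ha
    have hd : Disjoint (cells (R c) φ v y.1 y.2) (I y.1 ×ˢ I y.2) := by
      rw [Finset.disjoint_left]
      intro p hp hpI
      rw [mem_cells] at hp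
      rw [mem_product] at hpI
      refine (mem_filter.1 hpI.2).2 (hR.large_of_small (u := φ (y.1, p.1)) (w := v) ?_
        (mem_filter.1 hpI.1).2)
      exact hR.swap_right _ _ _ _ (hR.swap_left _ _ _ _ hp)
    have hb := card_le_nine (cells (R c) φ v y.1 y.2 ∪ I y.1 ×ˢ I y.2)
    rw [card_union_of_disjoint hd, card_product] at hb
    have hQ1 : (∃ w : Wit, w.Fits (cells (R c) φ u y.1 y.2) (I y.1)) = Q y := rfl
    have hQ2 : (∃ w : Wit, w.Fits (cells (R c) φ u y.2 y.1) (I y.2)) = Q y.swap := rfl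
    simp only [hQ1, hQ2] at ha
    omega
  have h3 : ∑ y ∈ O, (#(cells (R c) φ u y.1 y.2) : ℝ) + ∑ y ∈ O, (#(cells (R c) φ v y.1 y.2) : ℝ) ≤
      12 * #O + 12 * #(O.filter Q) := by
    have hsw : ∑ y ∈ O, (if Q y.swap then 1 else 0) = ∑ y ∈ O, (if Q y then 1 else 0) := by
      refine Finset.sum_equiv (Equiv.prodComm C C) ?_ ?_
      · intro y; simp [hO, eq_comm]
      · intro y _; rfl
    have : ∑ y ∈ O, #(cells (R c) φ u y.1 y.2) + ∑ y ∈ O, #(cells (R c) φ v y.1 y.2) ≤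
        12 * #O + 12 * #(O.filter Q) := by
      rw [← sum_add_distrib]
      refine (sum_le_sum fun y _ => hcell y).trans ?_
      have hcf : #(O.filter Q) = ∑ y ∈ O, (if Q y then 1 else 0) := card_filter _ _
      rw [sum_add_distrib, sum_add_distrib, ← mul_sum, ← mul_sum, hsw, hcf, sum_const, smul_eq_mul]
      omega
    exact_mod_cast this
  have h4 : O.filter Q ⊆ (univ.filter fun z => Switch δ R φ c u z).image Prod.fst := by
    intro y hy
    rw [mem_filter, hO, mem_offDiag] at hy
    obtain ⟨⟨-, -, hne⟩, w, hok, hw1, hw2, hw3⟩ := hy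
    refine mem_image.2 ⟨(y, w), ?_, rfl⟩
    simp only [mem_filter, mem_univ, true_and]
    refine ⟨hne, hok, mem_cells.1 hw1, mem_cells.1 hw2, ?_⟩
    by_contra hl
    exact hw3 (mem_filter.2 ⟨mem_univ _, hl⟩)
  have h5 : (#(O.filter Q) : ℝ) ≤ #{z | Switch δ R φ c u z} := by
    exact_mod_cast (card_le_card h4).trans card_image_le
  linarith

end switches

section augment
variable {C V : Type*} [Fintype C]

/-- The triple with index `c` is an edge of colour `c`. -/
def IsReal (R : C → V → V → V → Prop) (φ : C × Fin 3 → V) (c : C) : Prop :=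
  R c (φ (c, 0)) (φ (c, 1)) (φ (c, 2))

/-- If the arrangement `φ` has as many real triples as any rearrangement of it, then one cannot
destroy the triples in `D` and build more than `|D|` disjoint edges, in distinct colours of non-real
triples, from the vertices of `D` and of the non-real triples. -/
lemma no_augment {R : C → V → V → V → Prop} {φ : C × Fin 3 → V}
    (hmax : ∀ σ : Equiv.Perm (C × Fin 3), #{c | IsReal R (φ ∘ σ) c} ≤ #{c | IsReal R φ c})
    {N : Type*} [Fintype N] (col : N → C) (hcol : Function.Injective col)
    (hcolK : ∀ m, ¬ IsReal R φ (col m))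
    (pos : N → Fin 3 → C × Fin 3) (hpos : ∀ m m' i i', pos m i = pos m' i' → m = m' ∧ i = i')
    (hedge : ∀ m, R (col m) (φ (pos m 0)) (φ (pos m 1)) (φ (pos m 2)))
    (D : Finset C) (hD : ∀ m i, (pos m i).1 ∈ D ∨ ¬ IsReal R φ (pos m i).1)
    (hcard : #D < Fintype.card N) : False := by
  set T : Finset C := univ.filter (fun c => IsReal R φ c) \ D with hT
  set T' : Finset C := T ∪ univ.image col with hT'
  let g : C × Fin 3 → C × Fin 3 := fun p => if h : ∃ m, col m = p.1 then pos h.choose p.2 else p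
  have hg1 : ∀ m i, g (col m, i) = pos m i := by
    intro m i
    have h : ∃ m', col m' = col m := ⟨m, rfl⟩
    have he : h.choose = m := hcol h.choose_spec
    simp only [g]
    rw [dif_pos h, he]
  have hg2 : ∀ c ∈ T, ∀ i, g (c, i) = (c, i) := by
    intro c hc i
    simp only [g]
    rw [dif_neg]
    rintro ⟨m, hm⟩
    rw [hT, mem_sdiff, mem_filter] at hc
    exact hcolK m (hm ▸ hc.1.2)
  have hsep : ∀ c ∈ T, ∀ i m i', (c, i) ≠ pos m i' := by
    intro c hc i m i' h
    rw [hT, mem_sdiff, mem_filter] at hc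
    have := hD m i'
    rw [← h] at this
    exact this.elim hc.2 (fun h' => h' hc.1.2)
  have hinj : Set.InjOn g ((T' ×ˢ (univ : Finset (Fin 3)) : Finset (C × Fin 3)) : Set _) := by
    rintro ⟨c, i⟩ hp ⟨c', i'⟩ hp' he
    simp only [hT', coe_product, coe_union, coe_univ, Set.mem_prod, Set.mem_union, mem_coe,
      Set.mem_univ, and_true, mem_image, mem_univ, true_and] at hp hp'
    rcases hp with hp | ⟨m, rfl⟩ <;> rcases hp' with hp' | ⟨m', rfl⟩
    · rwa [hg2 c hp, hg2 c' hp'] at he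
    · rw [hg2 c hp, hg1] at he
      exact absurd he (hsep c hp _ _ _)
    · rw [hg2 c' hp', hg1] at he
      exact absurd he.symm (hsep c' hp' _ _ _)
    · rw [hg1, hg1] at he
      obtain ⟨rfl, rfl⟩ := hpos _ _ _ _ he
      rfl
  obtain ⟨e, he⟩ := Finset.exists_equiv_extend_of_card_eq
    (t := (univ : Finset (C × Fin 3))) (by rw [card_univ]) (subset_univ _) hinj
  let σ : Equiv.Perm (C × Fin 3) := e.trans (Equiv.subtypeUnivEquiv mem_univ)
  have hσ : ∀ p ∈ T' ×ˢ (univ : Finset (Fin 3)), σ p = g p := fun p hp => he p hp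
  have hreal : T' ⊆ univ.filter fun c => IsReal R (φ ∘ σ) c := by
    intro c hc
    rw [mem_filter]
    refine ⟨mem_univ _, ?_⟩
    have h : ∀ i, σ (c, i) = g (c, i) := fun i => hσ _ (mem_product.2 ⟨hc, mem_univ _⟩)
    simp only [IsReal, Function.comp, h]
    rw [hT', mem_union, mem_image] at hc
    rcases hc with hc | ⟨m, -, rfl⟩
    · simp only [hg2 c hc]
      rw [hT, mem_sdiff, mem_filter] at hc
      exact hc.1.2
    · simp only [hg1]
      exact hedge m
  have h1 := (card_le_card hreal).trans (hmax σ)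
  have hdis : Disjoint T (univ.image col) := by
    rw [Finset.disjoint_right]
    intro c hc hcT
    obtain ⟨m, -, rfl⟩ := mem_image.1 hc
    rw [hT, mem_sdiff, mem_filter] at hcT
    exact hcolK m hcT.1.2
  rw [hT', card_union_of_disjoint hdis, card_image_of_injective _ hcol, card_univ] at h1
  have h2 := le_card_sdiff D (univ.filter (fun c => IsReal R φ c))
  rw [← hT] at h2
  omega

end augment

section picking

/-- Greedy choice of one element from each `X j` such that the colours `g i (x j)` avoid `F` and
are distinct for distinct `j`. -/
lemma pick {J α C ι : Type*} [Fintype J] [Fintype ι] (X : J → Finset α) (g : ι → α → C)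
    (F : Finset C) (M : ℝ) (hM0 : 0 ≤ M) (hM : ∀ j i d, (#{x ∈ X j | g i x = d} : ℝ) ≤ M)
    (hbig : ∀ j, (Fintype.card ι : ℝ) * (#F + Fintype.card ι * Fintype.card J) * M < #(X j)) :
    ∃ x : J → α, (∀ j, x j ∈ X j) ∧ (∀ j i, g i (x j) ∉ F) ∧
      ∀ j j', j ≠ j' → ∀ i i', g i (x j) ≠ g i' (x j') := by
  have step : ∀ j (F' : Finset C), #F' ≤ #F + Fintype.card ι * Fintype.card J →
      ∃ x ∈ X j, ∀ i, g i x ∉ F' := by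
    intro j F' hF'
    by_contra hcon
    push Not at hcon
    have hsub : X j ⊆ (univ ×ˢ F' : Finset (ι × C)).biUnion
        fun p => (X j).filter fun x => g p.1 x = p.2 := by
      intro x hx
      obtain ⟨i, hi⟩ := hcon x hx
      exact mem_biUnion.2 ⟨(i, g i x), by simp [hi], by simp [hx]⟩
    have h1 : (#(X j) : ℝ) ≤ ∑ p ∈ (univ ×ˢ F' : Finset (ι × C)), (#{x ∈ X j | g p.1 x = p.2} : ℝ) := by
      exact_mod_cast (card_le_card hsub).trans card_biUnion_le
    have h2 : ∑ p ∈ (univ ×ˢ F' : Finset (ι × C)), (#{x ∈ X j | g p.1 x = p.2} : ℝ) ≤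
        (Fintype.card ι * #F' : ℝ) * M := by
      refine (sum_le_sum fun p _ => hM j p.1 p.2).trans ?_
      rw [sum_const, card_product, card_univ, nsmul_eq_mul]
      push_cast
      rfl
    have h3 : (#F' : ℝ) ≤ #F + Fintype.card ι * Fintype.card J := by exact_mod_cast hF'
    have h4 : (Fintype.card ι * #F' : ℝ) * M ≤
        (Fintype.card ι : ℝ) * (#F + Fintype.card ι * Fintype.card J) * M := by gcongr
    linarith [hbig j]
  have main : ∀ s : Finset J, ∃ x : J → α, (∀ j, x j ∈ X j) ∧ (∀ j ∈ s, ∀ i, g i (x j) ∉ F) ∧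
      ∀ j ∈ s, ∀ j' ∈ s, j ≠ j' → ∀ i i', g i (x j) ≠ g i' (x j') := by
    intro s
    induction s using Finset.induction_on with
    | empty =>
      choose x hx _ using fun j => step j ∅ (by simp)
      exact ⟨x, hx, by simp, by simp⟩
    | insert j s hj ih =>
      obtain ⟨x, hx, hF, hne⟩ := ih
      set F' := F ∪ (univ ×ˢ s : Finset (ι × J)).image fun p => g p.1 (x p.2) with hF'
      have hc : #F' ≤ #F + Fintype.card ι * Fintype.card J := by
        refine (card_union_le _ _).trans (Nat.add_le_add_left (card_image_le.trans ?_) _)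
        rw [card_product, card_univ]
        exact Nat.mul_le_mul_left _ (card_le_univ _)
      obtain ⟨y, hy, hyF⟩ := step j F' hc
      have hyF1 : ∀ i, g i y ∉ F := fun i h => hyF i (mem_union_left _ h)
      have hyF2 : ∀ i i', ∀ j' ∈ s, g i y ≠ g i' (x j') := fun i i' j' hj' h =>
        hyF i (mem_union_right _ (mem_image.2 ⟨(i', j'), by simp [hj'], h.symm⟩))
      have hs : ∀ j' ∈ s, Function.update x j y j' = x j' := fun j' hj' =>
        Function.update_of_ne (by rintro rfl; exact hj hj') _ _
      refine ⟨Function.update x j y, ?_, ?_, ?_⟩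
      · intro j'
        by_cases h : j' = j
        · subst h; simpa using hy
        · rw [Function.update_of_ne h]; exact hx j'
      · intro j' hj' i
        rcases mem_insert.1 hj' with rfl | h
        · simpa using hyF1 i
        · rw [hs _ h]; exact hF _ h i
      · intro j1 h1 j2 h2 h12 i i'
        rcases mem_insert.1 h1 with rfl | k1 <;> rcases mem_insert.1 h2 with rfl | k2
        · exact absurd rfl h12
        · rw [hs _ k2, Function.update_self]; exact hyF2 _ _ _ k2
        · rw [hs _ k1, Function.update_self]; exact (hyF2 _ _ _ k1).symm
        · rw [hs _ k1, hs _ k2]; exact hne _ k1 _ k2 h12 _ _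
  obtain ⟨x, hx, hF, hne⟩ := main univ
  exact ⟨x, hx, fun j i => hF j (mem_univ _) i, fun j j' h => hne j (mem_univ _) j' (mem_univ _) h⟩

end picking

/-! ### Impossible configurations in an optimal arrangement -/

section nearPerfect
variable {C V : Type*} [Fintype C]

/-- In an optimal arrangement no three disjoint pairs (vertex, colour) from non-real triples share a
cyclic transversal of two triples: they would replace these two triples by three edges. -/
lemma no_three_shifts {R : C → V → V → V → Prop} {φ : C × Fin 3 → V}
    (hmax : ∀ σ : Equiv.Perm (C × Fin 3), #{c | IsReal R (φ ∘ σ) c} ≤ #{c | IsReal R φ c})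
    (z : (C × C) × Fin 3) (p : Fin 3 → C × Fin 3) (c : Fin 3 → C)
    (hc : Function.Injective c) (hcK : ∀ j, ¬ IsReal R φ (c j))
    (hp : ∀ j j', j ≠ j' → (p j).1 ≠ (p j').1) (hpK : ∀ j, ¬ IsReal R φ (p j).1)
    (hp3 : ∀ j, (p j).1 ≠ z.1.1) (hp4 : ∀ j, (p j).1 ≠ z.1.2)
    (hs : ∀ j, Shift R φ (c j) (φ (p j)) z) : False := by
  obtain ⟨⟨d3, d4⟩, s⟩ := z
  have h34 : d3 ≠ d4 := (hs 0).1
  simp only at hp3 hp4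
  refine no_augment hmax c hc hcK (fun j => ![p j, (d3, j), (d4, j + s)]) ?_
    (fun j => (hs j).2 j) {d3, d4} ?_ ?_
  · intro j j' i i' h
    have e1 : p j = p j' → j = j' := fun h => by
      by_contra hne; exact hp j j' hne (by rw [h])
    fin_cases i <;> fin_cases i' <;> simp at h ⊢ <;> grind
  · intro j i
    have := hpK j
    fin_cases i <;> simp [this]
  · exact card_le_two.trans_lt (by simp)

set_option maxHeartbeats 4000000 in
/-- Each of three pairs of triples `d₁ j, d₂ j` is rebuilt into two edges so that the vertex
`(d₁ j, a'' j)` becomes free, and the freed vertices share a cyclic transversal of two further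
triples: eight triples are replaced by nine edges, contradicting optimality. -/
lemma no_three_switches {R : C → V → V → V → Prop} {φ : C × Fin 3 → V}
    (hmax : ∀ σ : Equiv.Perm (C × Fin 3), #{c | IsReal R (φ ∘ σ) c} ≤ #{c | IsReal R φ c})
    (z : (C × C) × Fin 3) (d₁ d₂ : Fin 3 → C) (a a' a'' b b' : Fin 3 → Fin 3)
    (c : Fin 3 → C) (q : Fin 3 × Fin 2 → C × Fin 3) (e : Fin 3 × Fin 2 → C)
    (haa' : ∀ j, a j ≠ a' j) (haa'' : ∀ j, a j ≠ a'' j) (haa''' : ∀ j, a' j ≠ a'' j)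
    (hbb' : ∀ j, b j ≠ b' j)
    (hc : ∀ j j', j ≠ j' → c j ≠ c j') (hcK : ∀ j, ¬ IsReal R φ (c j))
    (he : ∀ m m', m ≠ m' → e m ≠ e m') (heK : ∀ m, ¬ IsReal R φ (e m))
    (hec : ∀ m j, e m ≠ c j)
    (hq : ∀ m m', m ≠ m' → (q m).1 ≠ (q m').1) (hqK : ∀ m, ¬ IsReal R φ (q m).1)
    (hd11 : ∀ j j', j ≠ j' → d₁ j ≠ d₁ j') (hd22 : ∀ j j', j ≠ j' → d₂ j ≠ d₂ j')
    (hd12 : ∀ j j', d₁ j ≠ d₂ j')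
    (hd13 : ∀ j, d₁ j ≠ z.1.1) (hd14 : ∀ j, d₁ j ≠ z.1.2)
    (hd23 : ∀ j, d₂ j ≠ z.1.1) (hd24 : ∀ j, d₂ j ≠ z.1.2)
    (hq1 : ∀ m j, (q m).1 ≠ d₁ j) (hq2 : ∀ m j, (q m).1 ≠ d₂ j)
    (hq3 : ∀ m, (q m).1 ≠ z.1.1) (hq4 : ∀ m, (q m).1 ≠ z.1.2)
    (hs : ∀ j, Shift R φ (c j) (φ (d₁ j, a'' j)) z)
    (h0 : ∀ j, R (e (j, 0)) (φ (q (j, 0))) (φ (d₁ j, a j)) (φ (d₂ j, b j)))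
    (h1 : ∀ j, R (e (j, 1)) (φ (q (j, 1))) (φ (d₁ j, a' j)) (φ (d₂ j, b' j))) : False := by
  obtain ⟨⟨d3, d4⟩, s⟩ := z
  have h34 : d3 ≠ d4 := (hs 0).1
  simp only at hd13 hd14 hd23 hd24 hq3 hq4
  refine no_augment hmax (N := Fin 3 × Fin 3)
    (fun m => ![e (m.1, 0), e (m.1, 1), c m.1] m.2) ?_ ?_
    (fun m => ![![q (m.1, 0), (d₁ m.1, a m.1), (d₂ m.1, b m.1)],
      ![q (m.1, 1), (d₁ m.1, a' m.1), (d₂ m.1, b' m.1)],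
      ![(d₁ m.1, a'' m.1), (d3, m.1), (d4, m.1 + s)]] m.2) ?_ ?_
    ((univ.image d₁ ∪ univ.image d₂) ∪ {d3, d4}) ?_ ?_
  · rintro ⟨j, k⟩ ⟨j', k'⟩ h
    fin_cases k <;> fin_cases k' <;> simp at h ⊢ <;> grind
  · rintro ⟨j, k⟩
    fin_cases k
    · exact heK _
    · exact heK _
    · exact hcK _
  · rintro ⟨j, k⟩ ⟨j', k'⟩ i i' h
    have e1 : ∀ m m', q m = q m' → m = m' := fun m m' h => by
      by_contra hne; exact hq m m' hne (by rw [h])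
    fin_cases k <;> fin_cases k' <;> fin_cases i <;> fin_cases i' <;> simp at h ⊢ <;> grind
  · rintro ⟨j, k⟩
    fin_cases k
    · exact h0 j
    · exact h1 j
    · exact (hs j).2 j
  · rintro ⟨j, k⟩ i
    have k0 := hqK (j, 0)
    have k1 := hqK (j, 1)
    fin_cases k <;> fin_cases i <;> simp [k0, k1]
  · have c1 : #(univ.image d₁) ≤ 3 := card_image_le.trans (by simp)
    have c2 : #(univ.image d₂) ≤ 3 := card_image_le.trans (by simp)
    have c3 : #({d3, d4} : Finset C) ≤ 2 := card_le_two
    have c4 := card_union_le (univ.image d₁) (univ.image d₂)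
    have c5 := card_union_le (univ.image d₁ ∪ univ.image d₂) {d3, d4}
    simp only [Fintype.card_prod, Fintype.card_fin]
    omega

variable [Fintype V]

/-- Some cyclic transversal is shared by a positive proportion of any set of large pairs. -/
lemma shift_popular {δ : ℝ} (hδ : 0 < δ) {R : C → V → V → V → Prop} {φ : C × Fin 3 → V}
    (hφ : Function.Injective φ) (hn : 12 ≤ δ * Fintype.card V)
    (hC : (Fintype.card V : ℝ) - 3 * Fintype.card C ≤ δ / 8 * Fintype.card V)
    [Nonempty C] {α : Type*} (f : α → V) (X : Finset (α × C))
    (hX : ∀ x ∈ X, Large δ R x.2 (f x.1)) :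
    ∃ z, δ / 2 * #X ≤ #{x ∈ X | Shift R φ x.2 (f x.1) z} := by
  have hV : (0 : ℝ) < Fintype.card V := by
    by_contra h
    push Not at h
    nlinarith
  have hle : (3 * Fintype.card C : ℝ) ≤ Fintype.card V := by
    have := Fintype.card_le_of_injective φ hφ
    simp only [Fintype.card_prod, Fintype.card_fin] at this
    exact_mod_cast (by omega : 3 * Fintype.card C ≤ Fintype.card V)
  have hY : (#(univ : Finset ((C × C) × Fin 3)) : ℝ) ≤ (Fintype.card V : ℝ) ^ 2 / 3 := by
    simp only [card_univ, Fintype.card_prod, Fintype.card_fin]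
    push_cast
    have : (0 : ℝ) ≤ Fintype.card C := Nat.cast_nonneg _
    nlinarith
  obtain ⟨z, -, hz⟩ := exists_popular X univ (fun x z => Shift R φ x.2 (f x.1) z)
    (δ / 6 * (Fintype.card V : ℝ) ^ 2) ((Fintype.card V : ℝ) ^ 2 / 3) univ_nonempty (by positivity)
    hY (fun x hx => card_shift hφ hn hC (hX x hx))
  refine ⟨z, ?_⟩
  have h2 : (0 : ℝ) < (Fintype.card V : ℝ) ^ 2 / 3 := by positivity
  refine le_of_mul_le_mul_left ?_ h2
  calc _ = δ / 6 * (Fintype.card V : ℝ) ^ 2 * #X := by ring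
    _ ≤ _ := hz

end nearPerfect

/-! ### Near-perfect rainbow matchings -/

section nearPerfect
variable {C V : Type*} [Fintype C] [Fintype V]

/-- The two indices attached to a pair (position, colour): the triple of the position and the
colour. -/
def pairIdx : Fin 2 → (C × Fin 3) × C → C := ![fun x => x.1.1, fun x => x.2]

/-- The three indices attached to a switch together with a colour: its two triples and the
colour. -/
def switchIdx : Fin 3 → ((C × C) × Wit) × C → C :=
  ![fun x => x.1.1.1, fun x => x.1.1.2, fun x => x.2]

lemma pair_fiber (K : Finset C) (X : Finset ((C × Fin 3) × C))
    (hX : X ⊆ (K ×ˢ univ) ×ˢ K) (i : Fin 2) (d : C) :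
    (#{x ∈ X | pairIdx i x = d} : ℝ) ≤ 3 * #K := by
  have h : #{x ∈ X | pairIdx i x = d} ≤ 3 * #K := by
    fin_cases i
    · have : {x ∈ X | pairIdx 0 x = d} ⊆ (({d} : Finset C) ×ˢ (univ : Finset (Fin 3))) ×ˢ K := by
        intro x hx
        rw [mem_filter] at hx
        have h1 := hX hx.1
        have h2 : x.1.1 = d := hx.2
        simp only [mem_product, mem_univ, and_true, mem_singleton] at h1 ⊢
        exact ⟨h2, h1.2⟩
      have h3 := card_le_card this
      simp only [card_product, card_singleton, card_univ, Fintype.card_fin] at h3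
      simpa using h3
    · have : {x ∈ X | pairIdx 1 x = d} ⊆ (K ×ˢ (univ : Finset (Fin 3))) ×ˢ ({d} : Finset C) := by
        intro x hx
        rw [mem_filter] at hx
        have h1 := hX hx.1
        have h2 : x.2 = d := hx.2
        simp only [mem_product, mem_univ, and_true, mem_singleton] at h1 ⊢
        exact ⟨h1.1, h2⟩
      have h3 := card_le_card this
      simp only [card_product, card_singleton, card_univ, Fintype.card_fin] at h3
      simp only [Fin.mk_one]
      omega
  exact_mod_cast h

lemma switch_fiber (X : Finset (((C × C) × Wit) × C)) (i : Fin 3) (d : C) :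
    (#{x ∈ X | switchIdx i x = d} : ℝ) ≤ 243 * (Fintype.card C : ℝ) ^ 2 := by
  have h : #{x ∈ X | switchIdx i x = d} ≤ 243 * (Fintype.card C * Fintype.card C) := by
    have hW : Fintype.card Wit = 243 := by simp [Wit]
    have key : ∀ A : Finset (((C × C) × Wit) × C), {x ∈ X | switchIdx i x = d} ⊆ A →
        #A = 243 * (Fintype.card C * Fintype.card C) →
        #{x ∈ X | switchIdx i x = d} ≤ 243 * (Fintype.card C * Fintype.card C) :=
      fun A h1 h2 => h2 ▸ card_le_card h1
    fin_cases i
    · refine key (((({d} : Finset C) ×ˢ univ) ×ˢ univ) ×ˢ univ) ?_ ?_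
      · intro x hx
        have h2 : x.1.1.1 = d := (mem_filter.1 hx).2
        simp only [mem_product, mem_univ, mem_singleton, h2, and_self]
      · simp only [card_product, card_singleton, card_univ, hW]; ring
    · refine key (((univ ×ˢ ({d} : Finset C)) ×ˢ univ) ×ˢ univ) ?_ ?_
      · intro x hx
        have h2 : x.1.1.2 = d := (mem_filter.1 hx).2
        simp only [mem_product, mem_univ, mem_singleton, h2, and_self]
      · simp only [card_product, card_singleton, card_univ, hW]; ring
    · refine key (((univ ×ˢ univ) ×ˢ univ) ×ˢ ({d} : Finset C)) ?_ ?_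
      · intro x hx
        have h2 : x.2 = d := (mem_filter.1 hx).2
        simp only [mem_product, mem_univ, mem_singleton, h2, and_self]
      · simp only [card_product, card_singleton, card_univ, hW]; ring
  rw [sq]
  exact_mod_cast h

/-- An arrangement with the maximum number of real triples has a bounded number of non-real
triples: otherwise, one of the two local augmentations applies, according to whether many or few
of the pairs (vertex of a non-real triple, non-real colour) are large. -/
lemma card_nonreal_lt {δ : ℝ} (hδ : 0 < δ) (hδ1 : δ ≤ 1) {R : C → V → V → V → Prop}
    (hR : Ore δ R) {φ : C × Fin 3 → V} (hφ : Function.Injective φ)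
    (hn : 12 ≤ δ * Fintype.card V)
    (hC : (Fintype.card V : ℝ) - 3 * Fintype.card C ≤ δ / 8 * Fintype.card V)
    (hmax : ∀ σ : Equiv.Perm (C × Fin 3), #{c | IsReal R (φ ∘ σ) c} ≤ #{c | IsReal R φ c}) :
    δ ^ 3 * #{c | ¬ IsReal R φ c} < 10 ^ 9 := by
  by_contra hcon
  push Not at hcon
  set K : Finset C := univ.filter fun c => ¬ IsReal R φ c with hK
  have hKm : ∀ c, c ∈ K ↔ ¬ IsReal R φ c := fun c => by simp [hK]
  set k : ℝ := (K.card : ℝ) with hk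
  set n : ℝ := (Fintype.card V : ℝ) with hnn
  have hδ3 : 0 < δ ^ 3 := by positivity
  have hδ31 : δ ^ 3 ≤ δ := by nlinarith [mul_pos hδ hδ, pow_le_one₀ hδ.le hδ1 (n := 2)]
  have hk0 : 0 < k := by
    by_contra h
    push Not at h
    nlinarith
  have hδk : 10 ^ 9 ≤ δ * k := hcon.trans (by gcongr)
  have hV : 0 < n := by
    by_contra h
    push Not at h
    nlinarith
  have hCne : Nonempty C := by
    obtain ⟨c, -⟩ := card_pos.1 (by rw [hk] at hk0; exact_mod_cast hk0 : 0 < #K)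
    exact ⟨c⟩
  have hle : (3 * Fintype.card C : ℝ) ≤ n := by
    have := Fintype.card_le_of_injective φ hφ
    simp only [Fintype.card_prod, Fintype.card_fin] at this
    rw [hnn]
    exact_mod_cast (by omega : 3 * Fintype.card C ≤ Fintype.card V)
  have ht0 : (0 : ℝ) ≤ Fintype.card C := Nat.cast_nonneg _
  have htn : 9 * (Fintype.card C : ℝ) ^ 2 ≤ n ^ 2 := by nlinarith
  set W : Finset ((C × Fin 3) × C) := (K ×ˢ univ) ×ˢ K with hW
  have hWc : (#W : ℝ) = 3 * k ^ 2 := by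
    rw [hW, card_product, card_product, card_univ, Fintype.card_fin]; push_cast; ring
  have hWm : ∀ x ∈ W, x.1.1 ∈ K ∧ x.2 ∈ K := by
    intro x hx
    simpa [hW] using hx
  set X₁ := W.filter fun x => Large δ R x.2 (φ x.1) with hX₁
  set X₀ := W.filter fun x => ¬ Large δ R x.2 (φ x.1) with hX₀
  have hX : (#X₁ : ℝ) + #X₀ = 3 * k ^ 2 := by
    rw [← hWc]
    exact_mod_cast card_filter_add_card_filter_not (s := W) fun x => Large δ R x.2 (φ x.1)
  by_cases hbig : k ^ 2 ≤ #X₁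
  · obtain ⟨z, hz⟩ := shift_popular hδ hφ hn hC φ X₁ (fun x hx => (mem_filter.1 hx).2)
    set X := X₁.filter fun x => Shift R φ x.2 (φ x.1) z with hXdef
    have hXW : X ⊆ W := (filter_subset _ _).trans (filter_subset _ _)
    have hFc : (#({z.1.1, z.1.2} : Finset C) : ℝ) ≤ 2 := by exact_mod_cast card_le_two
    obtain ⟨x, hxX, hxF, hxne⟩ := pick (J := Fin 3) (fun _ => X) pairIdx {z.1.1, z.1.2} (3 * k)
      (by positivity) (fun _ => pair_fiber K X hXW) (by
        intro _
        simp only [Fintype.card_fin]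
        push_cast
        have h1 : (2 : ℝ) * (#({z.1.1, z.1.2} : Finset C) + 2 * 3) * (3 * k) ≤
          2 * (2 + 2 * 3) * (3 * k) := by gcongr
        have h2 : δ / 2 * k ^ 2 ≤ #X := le_trans (by gcongr) hz
        have h3 := mul_le_mul_of_nonneg_right hδk hk0.le
        nlinarith)
    have hx1 : ∀ j, Shift R φ (x j).2 (φ (x j).1) z := fun j => (mem_filter.1 (hxX j)).2
    refine no_three_shifts hmax z (fun j => (x j).1) (fun j => (x j).2) ?_ ?_ ?_ ?_ ?_ ?_ hx1
    · intro j j' h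
      by_contra hne
      exact hxne j j' hne 1 1 h
    · exact fun j => (hKm _).1 (hWm _ (hXW (hxX j))).2
    · exact fun j j' h => hxne j j' h 0 0
    · exact fun j => (hKm _).1 (hWm _ (hXW (hxX j))).1
    · exact fun j h => hxF j 0 (by simp [pairIdx, h])
    · exact fun j h => hxF j 0 (by simp [pairIdx, h])
  · push Not at hbig
    have hX0 : k ^ 2 ≤ #X₀ := by nlinarith [sq_nonneg k]
    have hX0ne : X₀.Nonempty := by
      rw [← card_pos]
      have : (0 : ℝ) < #X₀ := lt_of_lt_of_le (by positivity) hX0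
      exact_mod_cast this
    set θ : ℝ := δ / 648 with hθ
    have hθ0 : 0 < θ := by positivity
    -- Switches available to a positive proportion of the small pairs.
    set Z : Finset ((C × C) × Wit) := univ.filter fun z =>
      θ * #X₀ ≤ #{x ∈ X₀ | Switch δ R φ x.2 (φ x.1) z} with hZ
    have hY : (#(univ : Finset ((C × C) × Wit)) : ℝ) ≤ 27 * n ^ 2 := by
      simp only [card_univ, Fintype.card_prod, Fintype.card_fin]
      push_cast
      nlinarith
    have hZc : δ / 24 * n ^ 2 ≤ #Z := by
      have := many_popular X₀ univ (fun x z => Switch δ R φ x.2 (φ x.1) z) (δ / 12 * n ^ 2)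
        (27 * n ^ 2) θ hX0ne hθ0.le hY
        (fun x hx => card_switch hR hφ hn hC (mem_filter.1 hx).2)
      refine le_trans (le_of_eq ?_) this
      rw [hθ]; ring
    let f : (C × C) × Wit → V := fun z => φ (z.1.1, z.2.2.2.1)
    set X₂ : Finset (((C × C) × Wit) × C) :=
      (Z ×ˢ K).filter fun x => Large δ R x.2 (f x.1) with hX₂
    have hcol : ∀ z ∈ Z, θ * k / 3 ≤ #{c ∈ K | Large δ R c (f z)} := by
      intro z hz
      have h1 : θ * #X₀ ≤ #{x ∈ X₀ | Switch δ R φ x.2 (φ x.1) z} := (mem_filter.1 hz).2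
      have h2 : {x ∈ X₀ | Switch δ R φ x.2 (φ x.1) z} ⊆
          (K ×ˢ (univ : Finset (Fin 3))) ×ˢ {c ∈ K | Large δ R c (f z)} := by
        intro x hx
        rw [mem_filter] at hx
        have h3 := hWm x (mem_filter.1 hx.1).1
        simp only [mem_product, mem_univ, and_true, mem_filter]
        exact ⟨h3.1, h3.2, hx.2.2.2.2.2⟩
      have h3 : (#{x ∈ X₀ | Switch δ R φ x.2 (φ x.1) z} : ℝ) ≤
          k * 3 * #{c ∈ K | Large δ R c (f z)} := by
        have := card_le_card h2
        rw [card_product, card_product, card_univ, Fintype.card_fin] at this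
        rw [hk]; exact_mod_cast this
      have h4 : θ * k ^ 2 ≤ k * 3 * #{c ∈ K | Large δ R c (f z)} :=
        le_trans (by gcongr) (h1.trans h3)
      have h5 : k * (θ * k / 3) ≤ k * #{c ∈ K | Large δ R c (f z)} := by nlinarith
      exact le_of_mul_le_mul_left h5 hk0
    have hX2c : δ / 24 * n ^ 2 * (θ * k / 3) ≤ #X₂ := by
      have h1 : (#X₂ : ℝ) = ∑ z ∈ Z, (#{c ∈ K | Large δ R c (f z)} : ℝ) := by
        have : #X₂ = ∑ z ∈ Z, #{c ∈ K | Large δ R c (f z)} := by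
          rw [hX₂, card_filter, sum_product]
          exact sum_congr rfl fun z _ => (card_filter _ _).symm
        exact_mod_cast this
      rw [h1]
      calc _ ≤ (#Z : ℝ) * (θ * k / 3) := by gcongr
        _ = ∑ z ∈ Z, (θ * k / 3) := by rw [sum_const, nsmul_eq_mul]
        _ ≤ _ := sum_le_sum hcol
    obtain ⟨z, hz⟩ := shift_popular hδ hφ hn hC f X₂ (fun x hx => (mem_filter.1 hx).2)
    set X := X₂.filter fun x => Shift R φ x.2 (f x.1) z with hXdef
    have hXc : δ / 2 * (δ / 24 * n ^ 2 * (θ * k / 3)) ≤ #X := le_trans (by gcongr) hz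
    have hFc : (#({z.1.1, z.1.2} : Finset C) : ℝ) ≤ 2 := by exact_mod_cast card_le_two
    obtain ⟨y, hyX, hyF, hyne⟩ := pick (J := Fin 3) (fun _ => X) switchIdx {z.1.1, z.1.2}
      (27 * n ^ 2) (by positivity)
      (fun _ i d => (switch_fiber X i d).trans (by linarith)) (by
        intro _
        simp only [Fintype.card_fin]
        push_cast
        have h1 : (3 : ℝ) * (#({z.1.1, z.1.2} : Finset C) + 3 * 3) * (27 * n ^ 2) ≤
          3 * (2 + 3 * 3) * (27 * n ^ 2) := by gcongr
        have h2 : δ / 2 * (δ / 24 * n ^ 2 * (θ * k / 3)) = δ ^ 3 * k / 93312 * n ^ 2 := by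
          rw [hθ]; ring
        have h3 : (10 ^ 9 : ℝ) / 93312 * n ^ 2 ≤ δ ^ 3 * k / 93312 * n ^ 2 := by gcongr
        have h4 : 0 < n ^ 2 := by positivity
        linarith)
    have hy1 : ∀ j, Shift R φ (y j).2 (f (y j).1) z := fun j => (mem_filter.1 (hyX j)).2
    have hy2 : ∀ j, (y j).1 ∈ Z ∧ (y j).2 ∈ K := fun j =>
      mem_product.1 (mem_filter.1 (mem_filter.1 (hyX j)).1).1
    -- The indices used so far, to be avoided by the pairs that carry out the switches.
    set F : Finset C := {z.1.1, z.1.2} ∪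
      (univ : Finset (Fin 3 × Fin 3)).image fun p => switchIdx p.2 (y p.1) with hF
    have hFcard : (#F : ℝ) ≤ 11 := by
      have h1 := card_union_le ({z.1.1, z.1.2} : Finset C)
        ((univ : Finset (Fin 3 × Fin 3)).image fun p => switchIdx p.2 (y p.1))
      have h2 : #({z.1.1, z.1.2} : Finset C) ≤ 2 := card_le_two
      have h3 : #((univ : Finset (Fin 3 × Fin 3)).image fun p => switchIdx p.2 (y p.1)) ≤ 9 :=
        card_image_le.trans (by simp)
      rw [← hF] at h1
      exact_mod_cast (by omega : #F ≤ 11)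
    obtain ⟨x, hxX, hxF, hxne⟩ := pick (J := Fin 3 × Fin 2)
      (fun m => {x ∈ X₀ | Switch δ R φ x.2 (φ x.1) (y m.1).1}) pairIdx F (3 * k)
      (by positivity)
      (fun m => pair_fiber K _ ((filter_subset _ _).trans (filter_subset _ _))) (by
        intro m
        simp only [Fintype.card_fin, Fintype.card_prod]
        push_cast
        have h1 : (2 : ℝ) * (#F + 2 * (3 * 2)) * (3 * k) ≤ 2 * (11 + 2 * (3 * 2)) * (3 * k) := by
          gcongr
        have h2 : θ * #X₀ ≤ #{x ∈ X₀ | Switch δ R φ x.2 (φ x.1) (y m.1).1} :=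
          (mem_filter.1 (hy2 m.1).1).2
        have h3 : θ * k ^ 2 ≤ θ * #X₀ := by gcongr
        have h4 : (10 ^ 9 : ℝ) / 648 * k ≤ θ * k ^ 2 := by
          have := mul_le_mul_of_nonneg_right hδk hk0.le
          rw [hθ]; linarith
        linarith)
    have hx1 : ∀ m, Switch δ R φ (x m).2 (φ (x m).1) (y m.1).1 := fun m =>
      (mem_filter.1 (hxX m)).2
    have hx2 : ∀ m, (x m).1.1 ∈ K ∧ (x m).2 ∈ K := fun m =>
      hWm _ (mem_filter.1 (mem_filter.1 (hxX m)).1).1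
    have hxy : ∀ m i j l, pairIdx i (x m) ≠ switchIdx l (y j) := fun m i j l h =>
      hxF m i (mem_union_right _ (mem_image.2 ⟨(j, l), mem_univ _, h.symm⟩))
    have hxz3 : ∀ m, (x m).1.1 ≠ z.1.1 := fun m h =>
      hxF m 0 (mem_union_left _ (by simp [pairIdx, h]))
    have hxz4 : ∀ m, (x m).1.1 ≠ z.1.2 := fun m h =>
      hxF m 0 (mem_union_left _ (by simp [pairIdx, h]))
    refine no_three_switches hmax z (fun j => (y j).1.1.1) (fun j => (y j).1.1.2)
      (fun j => (y j).1.2.1) (fun j => (y j).1.2.2.1) (fun j => (y j).1.2.2.2.1)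
      (fun j => (y j).1.2.2.2.2.1) (fun j => (y j).1.2.2.2.2.2) (fun j => (y j).2)
      (fun m => (x m).1) (fun m => (x m).2)
      (fun j => (hx1 (j, 0)).2.1.1) (fun j => (hx1 (j, 0)).2.1.2.1)
      (fun j => (hx1 (j, 0)).2.1.2.2.1) (fun j => (hx1 (j, 0)).2.1.2.2.2)
      (fun j j' h => hyne j j' h 2 2) (fun j => (hKm _).1 (hy2 j).2)
      (fun m m' h => hxne m m' h 1 1) (fun m => (hKm _).1 (hx2 m).2)
      (fun m j => hxy m 1 j 2)
      (fun m m' h => hxne m m' h 0 0) (fun m => (hKm _).1 (hx2 m).1)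
      (fun j j' h => hyne j j' h 0 0) (fun j j' h => hyne j j' h 1 1) ?_
      (fun j h => hyF j 0 (by simp [switchIdx, h])) (fun j h => hyF j 0 (by simp [switchIdx, h]))
      (fun j h => hyF j 1 (by simp [switchIdx, h])) (fun j h => hyF j 1 (by simp [switchIdx, h]))
      (fun m j => hxy m 0 j 0) (fun m j => hxy m 0 j 1) hxz3 hxz4 hy1
      (fun j => (hx1 (j, 0)).2.2.1) (fun j => (hx1 (j, 1)).2.2.2.1)
    intro j j'
    by_cases h : j = j'
    · subst h
      exact (hx1 (j, 0)).1
    · exact hyne j j' h 0 1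

/-- Every arrangement of `3 |C|` vertices into triples can be rearranged so that all but a bounded
number of the triples are edges of their colour. -/
lemma exists_near_perfect {δ : ℝ} (hδ : 0 < δ) (hδ1 : δ ≤ 1) {R : C → V → V → V → Prop}
    (hR : Ore δ R) {φ : C × Fin 3 → V} (hφ : Function.Injective φ)
    (hn : 12 ≤ δ * Fintype.card V)
    (hC : (Fintype.card V : ℝ) - 3 * Fintype.card C ≤ δ / 8 * Fintype.card V) :
    ∃ σ : Equiv.Perm (C × Fin 3), δ ^ 3 * #{c | ¬ IsReal R (φ ∘ σ) c} < 10 ^ 9 := by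
  obtain ⟨σ, -, hσ⟩ := exists_max_image (univ : Finset (Equiv.Perm (C × Fin 3)))
    (fun σ => #{c | IsReal R (φ ∘ σ) c}) univ_nonempty
  refine ⟨σ, card_nonreal_lt hδ hδ1 hR (hφ.comp σ.injective) hn hC fun τ => ?_⟩
  exact hσ (τ.trans σ) (mem_univ _)

end nearPerfect

/-! ### Counting absorbers -/

section absorberCount
variable {C V : Type*} [Fintype C] [Fintype V] {δ : ℝ} {R : C → V → V → V → Prop}

/-- In every colour at least a proportion `2/3 + δ` of the vertices is large: with `s` small
vertices, the link of a small vertex has at most `(n - s)²` pairs and that of a neighbour of it at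
most `n² - s²`, since no edge contains two small vertices. -/
lemma Ore.card_large (h : Ore δ R) (d : C) :
    (2 / 3 + δ) * (Fintype.card V : ℝ) ≤ #{u | Large δ R d u} := by
  set n : ℝ := (Fintype.card V : ℝ) with hn
  set L : Finset V := univ.filter fun u => Large δ R d u with hL
  set S : Finset V := univ.filter fun u => ¬ Large δ R d u with hS
  have hLS : (#L : ℝ) + #S = n := by
    rw [hn, ← card_univ]
    exact_mod_cast card_filter_add_card_filter_not (s := univ) fun u => Large δ R d u
  have hSm : ∀ u, u ∈ S ↔ ¬ Large δ R d u := fun u => by simp [hS]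
  have hn0 : 0 ≤ n := Nat.cast_nonneg _
  rcases S.eq_empty_or_nonempty with h0 | ⟨u, hu⟩
  · rcases isEmpty_or_nonempty V with hV | ⟨⟨u⟩⟩
    · have : n = 0 := by rw [hn]; exact_mod_cast Fintype.card_eq_zero
      rw [this]; simp
    · have h1 := h.linkCard_gt d u
      have h2 := linkCard_le (R d) u
      have hnpos : 0 < n := by
        rw [hn]; exact_mod_cast Fintype.card_pos_iff.2 ⟨u⟩
      have h3 : 0 < n ^ 2 := by positivity
      have h4 : δ < 1 / 3 := by
        by_contra hc
        push Not at hc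
        have := h1.trans_le h2
        rw [← hn] at this
        nlinarith
      rw [h0, card_empty] at hLS
      push_cast at hLS
      nlinarith
  · obtain ⟨v, w, huv⟩ := h.exists_edge d u
    have h1 := h.sum_gt d u v w huv
    have e1 : (linkCard (R d) u : ℝ) ≤ (#L : ℝ) ^ 2 := by
      have : linkCard (R d) u ≤ #(L ×ˢ L) := by
        refine card_le_card fun p hp => ?_
        have hp : R d u p.1 p.2 := by simpa using hp
        have := (hSm u).1 hu
        simp only [mem_product, hL, mem_filter, mem_univ, true_and]
        exact ⟨h.large_of_small hp this, h.large_of_small (h.swap_right _ _ _ _ hp) this⟩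
      rw [card_product] at this
      rw [sq]; exact_mod_cast this
    have e2 : (linkCard (R d) v : ℝ) + (#S : ℝ) ^ 2 ≤ n ^ 2 := by
      have hdis : Disjoint (univ.filter fun p : V × V => R d v p.1 p.2) (S ×ˢ S) := by
        rw [disjoint_left]
        intro p hp hpS
        have hp : R d v p.1 p.2 := by simpa using hp
        rw [mem_product, hSm, hSm] at hpS
        exact hpS.2 (h.large_of_small
          (h.swap_right _ _ _ _ (h.swap_left _ _ _ _ hp)) hpS.1)
      have h2 := card_le_univ ((univ.filter fun p : V × V => R d v p.1 p.2) ∪ (S ×ˢ S))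
      rw [card_union_of_disjoint hdis, card_product, Fintype.card_prod] at h2
      rw [hn, sq, sq]
      exact_mod_cast h2
    rw [← hn] at h1
    have hS0 : (0 : ℝ) ≤ #S := Nat.cast_nonneg _
    have hL' : (#L : ℝ) = n - #S := by linarith
    rw [hL'] at e1
    have e3 : (4 / 3 + 2 * δ) * n ^ 2 < 2 * n ^ 2 - 2 * n * #S := by nlinarith
    have hnpos : 0 < n := by
      rw [hn]; exact_mod_cast Fintype.card_pos_iff.2 ⟨u⟩
    have e4 : n * (4 / 3 + 2 * δ) * n < n * (2 * n - 2 * #S) := by nlinarith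
    have e5 : (4 / 3 + 2 * δ) * n < 2 * n - 2 * #S :=
      lt_of_mul_lt_mul_left (by linarith) hn0
    rw [hL']; linarith

/-- The vertices that are large in at least a proportion `δ` of the colours. -/
noncomputable def good (δ : ℝ) (R : C → V → V → V → Prop) : Finset V :=
  univ.filter fun a => δ * (Fintype.card C : ℝ) ≤ #{d | Large δ R d a}

lemma card_good [Nonempty C] (hδ : 0 < δ) (h : Ore δ R) :
    2 / 3 * (Fintype.card V : ℝ) ≤ #(good δ R) := by
  have := many_popular (univ : Finset C) (univ : Finset V) (fun d a => Large δ R d a)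
    ((2 / 3 + δ) * (Fintype.card V : ℝ)) (Fintype.card V) δ univ_nonempty hδ.le
    (by rw [card_univ]) (fun d _ => h.card_large d)
  refine le_trans (le_of_eq (by ring)) (this.trans (le_of_eq ?_))
  rw [card_univ]
  rfl

lemma card_common (h : Ore δ R) {d : C} {a : V} (ha : Large δ R d a) (x : V) :
    3 * δ * (Fintype.card V : ℝ) ^ 2 ≤ #{p : V × V | R d a p.1 p.2 ∧ R d x p.1 p.2} := by
  have h1 := h.linkCard_gt d x
  have h2 : (2 / 3 + δ) * (Fintype.card V : ℝ) ^ 2 < linkCard (R d) a := ha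
  have h3 := card_inter_add_card_union (univ.filter fun p : V × V => R d a p.1 p.2)
    (univ.filter fun p : V × V => R d x p.1 p.2)
  rw [← filter_and] at h3
  have h4 := card_le_univ ((univ.filter fun p : V × V => R d a p.1 p.2) ∪
    (univ.filter fun p : V × V => R d x p.1 p.2))
  rw [Fintype.card_prod] at h4
  have h5 : linkCard (R d) a + linkCard (R d) x ≤
      #{p : V × V | R d a p.1 p.2 ∧ R d x p.1 p.2} + Fintype.card V * Fintype.card V := by
    unfold linkCard
    omega
  have h6 : (linkCard (R d) a : ℝ) + linkCard (R d) x ≤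
      #{p : V × V | R d a p.1 p.2 ∧ R d x p.1 p.2} + (Fintype.card V : ℝ) ^ 2 := by
    rw [sq]; exact_mod_cast h5
  nlinarith

/-- The coloured pairs `(d, p, q)` that extend both `a` and `x` to an edge of colour `d`. -/
noncomputable def links (R : C → V → V → V → Prop) (a x : V) : Finset (C × V × V) :=
  univ.filter fun y => R y.1 a y.2.1 y.2.2 ∧ R y.1 x y.2.1 y.2.2

lemma card_links (hδ : 0 < δ) (h : Ore δ R) {a : V} (ha : a ∈ good δ R) (x : V) :
    3 * δ ^ 2 * ((Fintype.card C : ℝ) * (Fintype.card V : ℝ) ^ 2) ≤ #(links R a x) := by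
  have ha : δ * (Fintype.card C : ℝ) ≤ #{d | Large δ R d a} := by simpa [good] using ha
  have h1 : (#(links R a x) : ℝ) =
      ∑ d : C, (#{p : V × V | R d a p.1 p.2 ∧ R d x p.1 p.2} : ℝ) := by
    have : #(links R a x) = ∑ d : C, #{p : V × V | R d a p.1 p.2 ∧ R d x p.1 p.2} := by
      rw [links, card_filter, ← univ_product_univ, sum_product]
      exact sum_congr rfl fun z _ => (card_filter _ _).symm
    exact_mod_cast this
  rw [h1]
  calc _ = δ * (Fintype.card C : ℝ) * (3 * δ * (Fintype.card V : ℝ) ^ 2) := by ring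
    _ ≤ (#{d | Large δ R d a} : ℝ) * (3 * δ * (Fintype.card V : ℝ) ^ 2) := by gcongr
    _ = ∑ d with Large δ R d a, 3 * δ * (Fintype.card V : ℝ) ^ 2 := by
      rw [sum_const, nsmul_eq_mul]
    _ ≤ ∑ d with Large δ R d a, (#{p : V × V | R d a p.1 p.2 ∧ R d x p.1 p.2} : ℝ) :=
      sum_le_sum fun d hd => card_common h (by simpa using hd) x
    _ ≤ _ := sum_le_sum_of_subset_of_nonneg (subset_univ _) fun _ _ _ => Nat.cast_nonneg _

/-- The ordered edges of colour `c` all of whose vertices are good. -/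
noncomputable def goodEdges (δ : ℝ) (R : C → V → V → V → Prop) (c : C) : Finset (Fin 3 → V) :=
  univ.filter fun a => (∀ i, a i ∈ good δ R) ∧ R c (a 0) (a 1) (a 2)

lemma card_goodEdges (hδ : 0 < δ) (h : Ore δ R) (c : C) :
    (Fintype.card V : ℝ) ^ 3 / 27 ≤ #(goodEdges δ R c) := by
  have : Nonempty C := ⟨c⟩
  set n : ℝ := (Fintype.card V : ℝ) with hn
  have hn0 : 0 ≤ n := Nat.cast_nonneg _
  set G := good δ R with hG
  have hGc : 2 / 3 * n ≤ #G := card_good hδ h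
  set L : Finset V := univ.filter fun u => Large δ R c u with hL
  have hLc : (2 / 3 + δ) * n ≤ #L := h.card_large c
  have hGL : n / 3 ≤ #(G ∩ L) := by
    have h1 := card_inter_add_card_union G L
    have h2 := card_le_univ (G ∪ L)
    have h3 : (#G : ℝ) + #L ≤ #(G ∩ L) + n := by
      rw [hn]; exact_mod_cast (by omega : #G + #L ≤ #(G ∩ L) + Fintype.card V)
    nlinarith
  have hpair : ∀ a ∈ G ∩ L, n ^ 2 / 9 ≤ #{p ∈ G ×ˢ G | R c a p.1 p.2} := by
    intro a ha
    have ha : Large δ R c a := by simpa [hL] using (mem_inter.1 ha).2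
    have h2 : (2 / 3 + δ) * n ^ 2 < linkCard (R c) a := ha
    have h3 := card_inter_add_card_union (univ.filter fun p : V × V => R c a p.1 p.2) (G ×ˢ G)
    have h4 := card_le_univ ((univ.filter fun p : V × V => R c a p.1 p.2) ∪ G ×ˢ G)
    have h5 : (univ.filter fun p : V × V => R c a p.1 p.2) ∩ (G ×ˢ G) =
        {p ∈ G ×ˢ G | R c a p.1 p.2} := by
      ext p; simp [and_comm]
    rw [h5, card_product] at h3
    rw [Fintype.card_prod] at h4
    have h6 : (linkCard (R c) a : ℝ) + #G * #G ≤ #{p ∈ G ×ˢ G | R c a p.1 p.2} + n * n := by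
      rw [hn]
      unfold linkCard
      exact_mod_cast (by omega)
    nlinarith
  have hle : ∑ a ∈ G ∩ L, #{p ∈ G ×ˢ G | R c a p.1 p.2} ≤ #(goodEdges δ R c) := by
    rw [← card_sigma]
    refine card_le_card_of_injOn (fun y => ![y.1, y.2.1, y.2.2]) ?_ ?_
    · rintro ⟨a, p⟩ hy
      simp only [coe_sigma, Set.mem_sigma_iff, mem_coe, mem_inter, mem_filter, mem_product] at hy
      simp only [goodEdges, mem_coe, mem_filter, mem_univ, true_and, Fin.forall_fin_succ]
      simpa using ⟨⟨hy.1.1, hy.2.1.1, hy.2.1.2⟩, hy.2.2⟩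
    · rintro ⟨a, p⟩ - ⟨a', p'⟩ - hy
      have h0 := congrFun hy 0
      have h1 := congrFun hy 1
      have h2 := congrFun hy 2
      simp at h0 h1 h2
      subst h0
      rw [Prod.ext h1 h2]
  calc n ^ 3 / 27 = n / 3 * (n ^ 2 / 9) := by ring
    _ ≤ #(G ∩ L) * (n ^ 2 / 9) := by gcongr
    _ = ∑ a ∈ G ∩ L, n ^ 2 / 9 := by rw [sum_const, nsmul_eq_mul]
    _ ≤ ∑ a ∈ G ∩ L, (#{p ∈ G ×ˢ G | R c a p.1 p.2} : ℝ) := sum_le_sum hpair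
    _ ≤ _ := by exact_mod_cast hle

/-- The shape of an absorber: three colours `ω.1 i` and nine vertices `ω.2 (i, j)`. -/
abbrev Gadget (C V : Type*) : Type _ := (Fin 3 → C) × (Fin 3 × Fin 3 → V)

/-- The gadget `ω` absorbs the colour `c` and the vertices `x`: its triples
`ω.2 (i, ·)` are edges of colour `ω.1 i`, they remain so when their first vertices are replaced by
the vertices `x`, and the first vertices form an edge of colour `c`. -/
def Absorbs (R : C → V → V → V → Prop) (c : C) (x : Fin 3 → V) (ω : Gadget C V) : Prop :=
  R c (ω.2 (0, 0)) (ω.2 (1, 0)) (ω.2 (2, 0)) ∧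
  ∀ i, R (ω.1 i) (ω.2 (i, 0)) (ω.2 (i, 1)) (ω.2 (i, 2)) ∧
    R (ω.1 i) (x i) (ω.2 (i, 1)) (ω.2 (i, 2))

/-- A positive proportion of all gadgets absorbs a given colour and triple. -/
lemma card_absorbs (hδ : 0 < δ) (h : Ore δ R) (c : C) (x : Fin 3 → V) :
    δ ^ 6 * (Fintype.card (Gadget C V) : ℝ) ≤ #{ω | Absorbs R c x ω} := by
  set n : ℝ := (Fintype.card V : ℝ) with hn
  set t : ℝ := (Fintype.card C : ℝ) with ht
  have hn0 : 0 ≤ n := Nat.cast_nonneg _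
  have ht0 : 0 ≤ t := Nat.cast_nonneg _
  have hΩ : (Fintype.card (Gadget C V) : ℝ) = t ^ 3 * n ^ 9 := by
    simp [Gadget, hn, ht]
  have hle : #((goodEdges δ R c).sigma fun a => Fintype.piFinset fun i => links R (a i) (x i)) ≤
      #{ω | Absorbs R c x ω} := by
    refine card_le_card_of_injOn (fun y => (fun i => (y.2 i).1,
      fun s => (![y.1 s.1, (y.2 s.1).2.1, (y.2 s.1).2.2] : Fin 3 → V) s.2)) ?_ ?_
    · rintro ⟨a, g⟩ hy
      simp only [coe_sigma, Set.mem_sigma_iff, mem_coe, Fintype.mem_piFinset, goodEdges, links,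
        mem_filter, mem_univ, true_and] at hy
      exact mem_coe.2 (mem_filter.2 ⟨mem_univ _, hy.1.2, fun i => hy.2 i⟩)
    · rintro ⟨a, g⟩ - ⟨a', g'⟩ - hy
      simp only [Prod.mk.injEq] at hy
      have h0 : a = a' := funext fun i => congrFun hy.2 (i, 0)
      have h1 : g = g' := funext fun i => Prod.ext (congrFun hy.1 i)
        (Prod.ext (congrFun hy.2 (i, 1)) (congrFun hy.2 (i, 2)))
      rw [h0, h1]
  have hpi : ∀ a ∈ goodEdges δ R c, (3 * δ ^ 2 * (t * n ^ 2)) ^ 3 ≤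
      (#(Fintype.piFinset fun i => links R (a i) (x i)) : ℝ) := by
    intro a ha
    have ha := (mem_filter.1 ha).2.1
    rw [Fintype.card_piFinset]
    push_cast
    calc (3 * δ ^ 2 * (t * n ^ 2)) ^ 3 = ∏ i : Fin 3, 3 * δ ^ 2 * (t * n ^ 2) := by simp
      _ ≤ _ := prod_le_prod (fun _ _ => by positivity) fun i _ => card_links hδ h (ha i) (x i)
  rw [hΩ]
  calc δ ^ 6 * (t ^ 3 * n ^ 9) = n ^ 3 / 27 * (3 * δ ^ 2 * (t * n ^ 2)) ^ 3 := by ring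
    _ ≤ #(goodEdges δ R c) * (3 * δ ^ 2 * (t * n ^ 2)) ^ 3 := by
      gcongr; exact card_goodEdges hδ h c
    _ = ∑ a ∈ goodEdges δ R c, (3 * δ ^ 2 * (t * n ^ 2)) ^ 3 := by rw [sum_const, nsmul_eq_mul]
    _ ≤ ∑ a ∈ goodEdges δ R c, (#(Fintype.piFinset fun i => links R (a i) (x i)) : ℝ) :=
      sum_le_sum hpi
    _ ≤ _ := by rw [card_sigma] at hle; exact_mod_cast hle

end absorberCount

/-! ### Random functions and the derandomised choice -/

section collisions
variable {α X : Type*} [Fintype α] [Fintype X]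

/-- Prescribing one coordinate of a function in terms of the others leaves a proportion of at most
`1 / |X|` of all functions. -/
lemma card_coord_eq (j : α) (h : (α → X) → X) (hh : ∀ g w, h (Function.update g j w) = h g) :
    #{g : α → X | g j = h g} * Fintype.card X ≤ Fintype.card (α → X) := by
  rw [← card_univ (α := X), ← card_product, ← card_univ]
  refine card_le_card_of_injOn (fun y => Function.update y.1 j y.2)
    (fun _ _ => mem_coe.2 (mem_univ _)) ?_
  rintro ⟨g, w⟩ hg ⟨g', w'⟩ hg' he
  have hg : g j = h g := by simpa using hg
  have hg' : g' j = h g' := by simpa using hg'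
  simp only at he
  have e1 : w = w' := by simpa using congrFun he j
  have e2 : h g = h g' := by rw [← hh g w, ← hh g' w', he]
  have e3 : g = g' := by
    funext i
    by_cases hi : i = j
    · rw [hi, hg, hg', e2]
    · simpa [hi] using congrFun he i
  rw [e1, e3]

/-- A random function is injective and avoids a small set with high probability. -/
lemma card_bad (F : Finset X) :
    #{g : α → X | ¬ (Function.Injective g ∧ ∀ j, g j ∉ F)} * Fintype.card X ≤
      Fintype.card α * (Fintype.card α + #F) * Fintype.card (α → X) := by
  have hsub : (univ.filter fun g : α → X => ¬ (Function.Injective g ∧ ∀ j, g j ∉ F)) ⊆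
      univ.biUnion fun j : α =>
        ((univ.erase j).biUnion fun j' => univ.filter fun g : α → X => g j = g j') ∪
        F.biUnion fun v => univ.filter fun g : α → X => g j = v := by
    intro g hg
    rw [mem_filter] at hg
    simp only [mem_biUnion, mem_univ, true_and, mem_union, mem_filter, mem_erase]
    by_cases hi : Function.Injective g
    · have h1 : ¬ ∀ j, g j ∉ F := fun h => hg.2 ⟨hi, h⟩
      push Not at h1
      obtain ⟨j, hj⟩ := h1
      exact ⟨j, Or.inr ⟨_, hj, rfl⟩⟩
    · simp only [Function.Injective] at hi
      push Not at hi
      obtain ⟨j, j', he, hne⟩ := hi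
      exact ⟨j, Or.inl ⟨j', ⟨hne.symm, trivial⟩, he⟩⟩
  set N := Fintype.card (α → X)
  have hone : ∀ j : α, #(((univ.erase j).biUnion fun j' =>
      univ.filter fun g : α → X => g j = g j') ∪
        F.biUnion fun v => univ.filter fun g : α → X => g j = v) * Fintype.card X ≤
      (Fintype.card α + #F) * N := by
    intro j
    have h1 : #((univ.erase j).biUnion fun j' => univ.filter fun g : α → X => g j = g j') *
        Fintype.card X ≤ Fintype.card α * N := by
      refine (Nat.mul_le_mul_right _ card_biUnion_le).trans ?_
      rw [sum_mul]
      refine (sum_le_card_nsmul _ _ N fun j' hj' => ?_).trans ?_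
      · exact card_coord_eq j (fun g => g j') fun g w => by
          rw [Function.update_of_ne (mem_erase.1 hj').1]
      · rw [smul_eq_mul]
        exact Nat.mul_le_mul_right _ (card_le_univ _)
    have h2 : #(F.biUnion fun v => univ.filter fun g : α → X => g j = v) *
        Fintype.card X ≤ #F * N := by
      refine (Nat.mul_le_mul_right _ card_biUnion_le).trans ?_
      rw [sum_mul]
      exact (sum_le_card_nsmul _ _ N fun v _ => card_coord_eq j (fun _ => v) fun _ _ => rfl).trans
        (le_of_eq (smul_eq_mul _ _))
    refine (Nat.mul_le_mul_right _ (card_union_le _ _)).trans ?_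
    rw [add_mul, add_mul]
    exact add_le_add h1 h2
  refine (Nat.mul_le_mul_right _ ((card_le_card hsub).trans card_biUnion_le)).trans ?_
  rw [sum_mul]
  refine (sum_le_card_nsmul _ _ _ fun j _ => hone j).trans (le_of_eq ?_)
  rw [smul_eq_mul, card_univ, mul_assoc]

end collisions

section greedy

/-- Derandomised choice.  Objects `ω` are added one by one subject to a constraint `ok`, and each
member of `T` is hit by a proportion `β` of all objects whenever a new one is to be chosen.
Then the sum of `2 ^ (-number of hits)` over `T` can be kept exponentially small. -/
lemma greedy {Ω T : Type*} [Fintype Ω] [Fintype T] [Nonempty Ω] [Nonempty T] (P : Finset Ω → Prop)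
    (ok : Finset Ω → Ω → Prop)
    (hit : T → Ω → Prop) {β : ℝ} (hβ : 0 < β) (m : ℕ) (h0 : P ∅)
    (hP : ∀ S ω, P S → ok S ω → P (insert ω S)) (hnew : ∀ S ω, ok S ω → ω ∉ S)
    (hmany : ∀ S, P S → #S < m → ∀ q, β * Fintype.card Ω ≤ #{ω | ok S ω ∧ hit q ω}) :
    ∃ S, P S ∧ #S = m ∧
      ∑ q, (1 / 2 : ℝ) ^ #{ω ∈ S | hit q ω} ≤ Fintype.card T * (1 - β / 2) ^ m := by
  suffices H : ∀ k ≤ m, ∃ S, P S ∧ #S = k ∧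
      ∑ q, (1 / 2 : ℝ) ^ #{ω ∈ S | hit q ω} ≤ Fintype.card T * (1 - β / 2) ^ k from H m le_rfl
  intro k
  induction k with
  | zero => exact fun _ => ⟨∅, h0, card_empty, by simp⟩
  | succ k ih =>
    intro hk
    obtain ⟨S, hS, hSk, hsum⟩ := ih (by omega)
    have hm := hmany S hS (by omega)
    have hN : (0 : ℝ) < Fintype.card Ω := by exact_mod_cast Fintype.card_pos
    set N : ℝ := (Fintype.card Ω : ℝ) with hNdef
    set O : Finset Ω := univ.filter fun ω => ok S ω with hO
    have hON : (#O : ℝ) ≤ N := by rw [hNdef]; exact_mod_cast card_le_univ _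
    have hOA : ∀ q, β * N ≤ #{ω ∈ O | hit q ω} := fun q => by
      rw [hO, filter_filter]; exact hm q
    have hβ1 : β ≤ 1 := by
      have h1 := hOA (Classical.arbitrary T)
      have h2 : (#{ω ∈ O | hit (Classical.arbitrary T) ω} : ℝ) ≤ #O := by
        exact_mod_cast card_filter_le _ _
      by_contra hc
      push Not at hc
      nlinarith
    have hOne : O.Nonempty := by
      rw [← card_pos]
      have h1 := hOA (Classical.arbitrary T)
      have h2 : (#{ω ∈ O | hit (Classical.arbitrary T) ω} : ℝ) ≤ #O := by
        exact_mod_cast card_filter_le _ _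
      have : (0 : ℝ) < #O := by nlinarith [mul_pos hβ hN]
      exact_mod_cast this
    set W : ℝ := ∑ q, (1 / 2 : ℝ) ^ #{ω ∈ S | hit q ω} with hW
    have hstep : ∀ ω ∈ O, ∀ q, (1 / 2 : ℝ) ^ #{ω' ∈ insert ω S | hit q ω'} =
        (1 / 2 : ℝ) ^ #{ω ∈ S | hit q ω} * (1 - if hit q ω then 1 / 2 else 0) := by
      intro ω hω q
      have hωS : ω ∉ S := hnew S ω (by simpa [hO] using hω)
      rw [filter_insert]
      split_ifs with hh
      · rw [card_insert_of_notMem fun h => hωS (mem_filter.1 h).1, pow_succ]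
        norm_num
      · norm_num
    have htot : ∑ ω ∈ O, ∑ q, (1 / 2 : ℝ) ^ #{ω' ∈ insert ω S | hit q ω'} ≤
        ∑ ω ∈ O, W * (1 - β / 2) := by
      rw [sum_comm, sum_const, nsmul_eq_mul, hW, sum_mul, mul_sum]
      refine sum_le_sum fun q _ => ?_
      rw [sum_congr rfl fun ω hω => hstep ω hω q, ← mul_sum, sum_sub_distrib, ← sum_filter,
        sum_const, sum_const, nsmul_eq_mul, nsmul_eq_mul]
      have h1 := hOA q
      have h2 : (0 : ℝ) ≤ (1 / 2 : ℝ) ^ #{ω ∈ S | hit q ω} := by positivity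
      have h3 : (#O : ℝ) * 1 - #{ω ∈ O | hit q ω} * (1 / 2) ≤ #O * (1 - β / 2) := by nlinarith
      nlinarith [mul_le_mul_of_nonneg_left h3 h2]
    obtain ⟨ω, hω, hle⟩ := exists_le_of_sum_le hOne htot
    have hok : ok S ω := by simpa [hO] using hω
    refine ⟨insert ω S, hP S ω hS hok, ?_, ?_⟩
    · rw [card_insert_of_notMem (hnew S ω hok), hSk]
    · refine hle.trans ?_
      rw [pow_succ, ← mul_assoc]
      exact mul_le_mul_of_nonneg_right hsum (by linarith)

end greedy

/-! ### Absorption -/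

section absorption
variable {C V : Type*} [Fintype C] [Fintype V] {δ : ℝ} {R : C → V → V → V → Prop}

/-- The colours used by a set of gadgets. -/
noncomputable def cols (S : Finset (Gadget C V)) : Finset C :=
  (S ×ˢ univ).image fun y => y.1.1 y.2

/-- The vertices used by a set of gadgets. -/
noncomputable def verts (S : Finset (Gadget C V)) : Finset V :=
  (S ×ˢ univ).image fun y => y.1.2 y.2

lemma mem_cols {S : Finset (Gadget C V)} {c : C} : c ∈ cols S ↔ ∃ ω ∈ S, ∃ i, ω.1 i = c := by
  simp only [cols, mem_image, mem_product, mem_univ, and_true]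
  constructor
  · rintro ⟨⟨ω, i⟩, h1, h2⟩
    exact ⟨ω, h1, i, h2⟩
  · rintro ⟨ω, h1, i, h2⟩
    exact ⟨(ω, i), h1, h2⟩

lemma mem_verts {S : Finset (Gadget C V)} {v : V} : v ∈ verts S ↔ ∃ ω ∈ S, ∃ s, ω.2 s = v := by
  simp only [verts, mem_image, mem_product, mem_univ, and_true]
  constructor
  · rintro ⟨⟨ω, i⟩, h1, h2⟩
    exact ⟨ω, h1, i, h2⟩
  · rintro ⟨ω, h1, i, h2⟩
    exact ⟨(ω, i), h1, h2⟩

lemma card_cols_le (S : Finset (Gadget C V)) : #(cols S) ≤ 3 * #S := by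
  refine card_image_le.trans (le_of_eq ?_)
  rw [card_product, card_univ, Fintype.card_fin, mul_comm]

lemma card_verts_le (S : Finset (Gadget C V)) : #(verts S) ≤ 9 * #S := by
  refine card_image_le.trans (le_of_eq ?_)
  rw [card_product, card_univ, Fintype.card_prod, Fintype.card_fin, mul_comm]

/-- A set of gadgets that carry edges and use pairwise distinct colours and vertices. -/
structure Family (R : C → V → V → V → Prop) (S : Finset (Gadget C V)) : Prop where
  edge : ∀ ω ∈ S, ∀ i, R (ω.1 i) (ω.2 (i, 0)) (ω.2 (i, 1)) (ω.2 (i, 2))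
  col_inj : ∀ ω ∈ S, ∀ ω' ∈ S, ∀ i i', ω.1 i = ω'.1 i' → ω = ω' ∧ i = i'
  vert_inj : ∀ ω ∈ S, ∀ ω' ∈ S, ∀ s s', ω.2 s = ω'.2 s' → ω = ω' ∧ s = s'

lemma Family.card_cols {S : Finset (Gadget C V)} (h : Family R S) : #(cols S) = 3 * #S := by
  rw [cols, card_image_of_injOn, card_product, card_univ, Fintype.card_fin, mul_comm]
  rintro ⟨ω, i⟩ hω ⟨ω', i'⟩ hω' he
  simp only [mem_coe, mem_product, mem_univ, and_true] at hω hω'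
  obtain ⟨h1, h2⟩ := h.col_inj ω hω ω' hω' i i' he
  rw [h1, h2]

lemma Family.card_verts {S : Finset (Gadget C V)} (h : Family R S) : #(verts S) = 9 * #S := by
  rw [verts, card_image_of_injOn, card_product, card_univ, Fintype.card_prod, Fintype.card_fin,
    mul_comm]
  rintro ⟨ω, i⟩ hω ⟨ω', i'⟩ hω' he
  simp only [mem_coe, mem_product, mem_univ, and_true] at hω hω'
  obtain ⟨h1, h2⟩ := h.vert_inj ω hω ω' hω' i i' he
  rw [h1, h2]

/-- The gadget `ω` may be added to the family `S`. -/
def Fresh (R : C → V → V → V → Prop) (S : Finset (Gadget C V)) (ω : Gadget C V) : Prop :=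
  (∀ i, R (ω.1 i) (ω.2 (i, 0)) (ω.2 (i, 1)) (ω.2 (i, 2))) ∧
  (Function.Injective ω.1 ∧ ∀ i, ω.1 i ∉ cols S) ∧
  (Function.Injective ω.2 ∧ ∀ s, ω.2 s ∉ verts S)

lemma Family.insert {S : Finset (Gadget C V)} {ω : Gadget C V} (h : Family R S)
    (hω : Fresh R S ω) : Family R (insert ω S) where
  edge := by
    intro ω' hω' i
    rcases mem_insert.1 hω' with rfl | h'
    · exact hω.1 i
    · exact h.edge ω' h' i
  col_inj := by
    intro a ha b hb i i' he
    rcases mem_insert.1 ha with rfl | ha' <;> rcases mem_insert.1 hb with rfl | hb'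
    · exact ⟨rfl, hω.2.1.1 he⟩
    · exact absurd (mem_cols.2 ⟨b, hb', i', he.symm⟩) (hω.2.1.2 i)
    · exact absurd (mem_cols.2 ⟨a, ha', i, he⟩) (hω.2.1.2 i')
    · exact h.col_inj a ha' b hb' i i' he
  vert_inj := by
    intro a ha b hb i i' he
    rcases mem_insert.1 ha with rfl | ha' <;> rcases mem_insert.1 hb with rfl | hb'
    · exact ⟨rfl, hω.2.2.1 he⟩
    · exact absurd (mem_verts.2 ⟨b, hb', i', he.symm⟩) (hω.2.2.2 i)
    · exact absurd (mem_verts.2 ⟨a, ha', i, he⟩) (hω.2.2.2 i')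
    · exact h.vert_inj a ha' b hb' i i' he

/-- Most absorbing gadgets avoid the colours and vertices of a small family. -/
lemma card_fresh (hδ : 0 < δ) (h : Ore δ R) (hVC : Fintype.card V = 3 * Fintype.card C) {m : ℕ}
    (hm : 216 * ((m : ℝ) + 1) ≤ δ ^ 6 * Fintype.card V) (S : Finset (Gadget C V)) (hS : #S < m)
    (c : C) (x : Fin 3 → V) :
    δ ^ 6 / 2 * Fintype.card (Gadget C V) ≤ #{ω | Fresh R S ω ∧ Absorbs R c x ω} := by
  set bC : Finset (Fin 3 → C) :=
    univ.filter fun g => ¬ (Function.Injective g ∧ ∀ j, g j ∉ cols S) with hbC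
  set bV : Finset (Fin 3 × Fin 3 → V) :=
    univ.filter fun g => ¬ (Function.Injective g ∧ ∀ j, g j ∉ verts S) with hbV
  set NC := Fintype.card (Fin 3 → C) with hNC
  set NV := Fintype.card (Fin 3 × Fin 3 → V) with hNV
  have hN : Fintype.card (Gadget C V) = NC * NV := Fintype.card_prod _ _
  have hsub : (univ.filter fun ω : Gadget C V => Absorbs R c x ω) ⊆
      (univ.filter fun ω : Gadget C V => Fresh R S ω ∧ Absorbs R c x ω) ∪
        (bC ×ˢ univ ∪ univ ×ˢ bV) := by
    intro ω hω
    have hω : Absorbs R c x ω := (mem_filter.1 hω).2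
    simp only [mem_union, mem_filter, mem_univ, true_and, mem_product, and_true, hbC, hbV]
    by_cases h1 : Function.Injective ω.1 ∧ ∀ j, ω.1 j ∉ cols S
    · by_cases h2 : Function.Injective ω.2 ∧ ∀ j, ω.2 j ∉ verts S
      · exact Or.inl ⟨⟨fun i => (hω.2 i).1, h1, h2⟩, hω⟩
      · exact Or.inr (Or.inr h2)
    · exact Or.inr (Or.inl h1)
  have h1 := (card_le_card hsub).trans ((card_union_le _ _).trans
    (Nat.add_le_add_left (card_union_le _ _) _))
  rw [card_product, card_product, card_univ, card_univ, ← hNC, ← hNV] at h1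
  have h2 : #bC * Fintype.card C ≤ 3 * (3 + #(cols S)) * NC := by
    have := card_bad (α := Fin 3) (cols S)
    rw [Fintype.card_fin] at this
    convert this
  have h3 : #bV * Fintype.card V ≤ 9 * (9 + #(verts S)) * NV := by
    have := card_bad (α := Fin 3 × Fin 3) (verts S)
    rw [Fintype.card_prod, Fintype.card_fin] at this
    convert this
  have h4 : #bC * Fintype.card V ≤ 27 * (m + 1) * NC := by
    have : 3 + #(cols S) ≤ 3 * (m + 1) := by have := card_cols_le S; omega
    calc #bC * Fintype.card V = 3 * (#bC * Fintype.card C) := by rw [hVC]; ring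
      _ ≤ 3 * (3 * (3 * (m + 1)) * NC) :=
        Nat.mul_le_mul_left _ (h2.trans (by gcongr))
      _ = _ := by ring
  have h5 : #bV * Fintype.card V ≤ 81 * (m + 1) * NV := by
    have : 9 + #(verts S) ≤ 9 * (m + 1) := by have := card_verts_le S; omega
    calc #bV * Fintype.card V ≤ 9 * (9 * (m + 1)) * NV := h3.trans (by gcongr)
      _ = _ := by ring
  have h6 : (#bC * NV + NC * #bV) * Fintype.card V ≤ 108 * (m + 1) * (NC * NV) := by
    calc _ = #bC * Fintype.card V * NV + NC * (#bV * Fintype.card V) := by ring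
      _ ≤ 27 * (m + 1) * NC * NV + NC * (81 * (m + 1) * NV) := by gcongr
      _ = _ := by ring
  have h7 := card_absorbs hδ h c x
  rw [hN] at h7 ⊢
  set n : ℝ := (Fintype.card V : ℝ) with hn
  set N : ℝ := ((NC * NV : ℕ) : ℝ) with hNdef
  have hN0 : 0 ≤ N := Nat.cast_nonneg _
  have h8 : ((#bC * NV + NC * #bV : ℕ) : ℝ) * n ≤ 108 * ((m : ℝ) + 1) * N := by
    rw [hn, hNdef]; exact_mod_cast h6
  have hn0 : 0 < n := by
    by_contra hc
    push Not at hc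
    have h1 : δ ^ 6 * n ≤ 0 := mul_nonpos_of_nonneg_of_nonpos (by positivity) hc
    have h2 : (0 : ℝ) ≤ m := Nat.cast_nonneg _
    linarith
  have h9 : ((#bC * NV + NC * #bV : ℕ) : ℝ) ≤ δ ^ 6 / 2 * N := by
    refine le_of_mul_le_mul_right ?_ hn0
    have := mul_le_mul_of_nonneg_right hm hN0
    linarith
  have h10 : (#{ω | Absorbs R c x ω} : ℝ) ≤ #{ω | Fresh R S ω ∧ Absorbs R c x ω} +
      ((#bC * NV + NC * #bV : ℕ) : ℝ) := by exact_mod_cast h1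
  linarith

/-- A family of `m` disjoint gadgets in which every colour and triple is absorbed many times. -/
lemma exists_family [Nonempty C] (hδ : 0 < δ) (h : Ore δ R)
    (hVC : Fintype.card V = 3 * Fintype.card C)
    {m H : ℕ} (hm : 216 * ((m : ℝ) + 1) ≤ δ ^ 6 * Fintype.card V)
    (hH : (Fintype.card V : ℝ) ^ 4 * (1 - δ ^ 6 / 4) ^ m < (1 / 2) ^ H) (hδ1 : δ ≤ 1) :
    ∃ S : Finset (Gadget C V), Family R S ∧ #S = m ∧
      ∀ c x, H ≤ #{ω ∈ S | Absorbs R c x ω} := by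
  have : Nonempty V := by
    rw [← Fintype.card_pos_iff, hVC]
    have : 0 < Fintype.card C := Fintype.card_pos
    omega
  obtain ⟨S, hS, hSm, hsum⟩ := greedy (Ω := Gadget C V) (T := C × (Fin 3 → V)) (Family R) (Fresh R)
    (fun q ω => Absorbs R q.1 q.2 ω) (β := δ ^ 6 / 2) (by positivity) m
    ⟨by simp, by simp, by simp⟩ (fun S ω hS hω => by convert hS.insert hω)
    (fun S ω hω hmem => hω.2.1.2 0 (mem_cols.2 ⟨ω, hmem, 0, rfl⟩))
    (fun S _ hlt q => card_fresh hδ h hVC hm S hlt q.1 q.2)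
  refine ⟨S, hS, hSm, fun c x => ?_⟩
  have h1 : (1 / 2 : ℝ) ^ #{ω ∈ S | Absorbs R c x ω} ≤
      ∑ q : C × (Fin 3 → V), (1 / 2 : ℝ) ^ #{ω ∈ S | Absorbs R q.1 q.2 ω} :=
    single_le_sum (f := fun q : C × (Fin 3 → V) =>
      (1 / 2 : ℝ) ^ #{ω ∈ S | Absorbs R q.1 q.2 ω}) (fun _ _ => by positivity) (mem_univ (c, x))
  have h2 : (Fintype.card (C × (Fin 3 → V)) : ℝ) ≤ (Fintype.card V : ℝ) ^ 4 := by
    have : Fintype.card (C × (Fin 3 → V)) ≤ Fintype.card V ^ 4 := by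
      rw [Fintype.card_prod, Fintype.card_fun, Fintype.card_fin, pow_succ' _ 3]
      exact Nat.mul_le_mul_right _ (by omega)
    exact_mod_cast this
  have hp : δ ^ 6 ≤ 1 := pow_le_one₀ hδ.le hδ1
  have h3 : (1 / 2 : ℝ) ^ #{ω ∈ S | Absorbs R c x ω} < (1 / 2) ^ H := by
    refine (h1.trans hsum).trans_lt (lt_of_le_of_lt ?_ hH)
    rw [show (1 : ℝ) - δ ^ 6 / 2 / 2 = 1 - δ ^ 6 / 4 by ring]
    exact mul_le_mul_of_nonneg_right h2 (pow_nonneg (by linarith) _)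
  exact ((pow_lt_pow_iff_right_of_lt_one₀ (by norm_num) (by norm_num)).1 h3).le

/-- A family absorbing everything often enough completes a near-perfect rainbow matching of the
remaining colours and vertices to a perfect one. -/
lemma assemble (hδ : 0 < δ) (hδ1 : δ ≤ 1) (h : Ore δ R)
    (hVC : Fintype.card V = 3 * Fintype.card C) (hn : 12 ≤ δ * Fintype.card V)
    {S : Finset (Gadget C V)} (hS : Family R S) (hSn : 9 * (#S : ℝ) ≤ δ / 8 * Fintype.card V)
    {H : ℕ} (hH : 10 ^ 9 ≤ δ ^ 3 * H) (hSH : ∀ c x, H ≤ #{ω ∈ S | Absorbs R c x ω}) :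
    ∃ f : C → Fin 3 → V, (∀ c, R c (f c 0) (f c 1) (f c 2)) ∧
      Function.Injective fun y : C × Fin 3 => f y.1 y.2 := by
  have hC' : Fintype.card {c // c ∉ cols S} + 3 * #S = Fintype.card C := by
    rw [Fintype.card_subtype_compl, ← hS.card_cols, Fintype.card_coe]
    exact Nat.sub_add_cancel (card_le_univ _)
  have hV' : Fintype.card {v // v ∉ verts S} + 9 * #S = Fintype.card V := by
    rw [Fintype.card_subtype_compl, ← hS.card_verts, Fintype.card_coe]
    exact Nat.sub_add_cancel (card_le_univ _)
  obtain ⟨e⟩ : Nonempty ({c // c ∉ cols S} × Fin 3 ≃ {v // v ∉ verts S}) := by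
    rw [← Fintype.card_eq, Fintype.card_prod, Fintype.card_fin]
    omega
  let R' : {c // c ∉ cols S} → V → V → V → Prop := fun c => R c
  have hR' : Ore δ R' := ⟨fun c => h.swap_left c, fun c => h.swap_right c,
    fun c => h.exists_edge c, fun c => h.sum_gt c⟩
  obtain ⟨σ, hσ⟩ := exists_near_perfect hδ hδ1 hR' (φ := fun y => (e y : V))
    (Subtype.val_injective.comp e.injective) hn (by
      have h1 : (Fintype.card {c // c ∉ cols S} : ℝ) + 3 * #S = Fintype.card C := by
        exact_mod_cast hC'
      have h2 : (Fintype.card V : ℝ) = 3 * Fintype.card C := by exact_mod_cast hVC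
      linarith)
  set φ : {c // c ∉ cols S} × Fin 3 → V := (fun y => (e y : V)) ∘ σ with hφ
  have hφs : ∀ v, v ∉ verts S → ∃ y, φ y = v := by
    intro v hv
    refine ⟨σ.symm (e.symm ⟨v, hv⟩), ?_⟩
    simp [hφ]
  have hK : #{c | ¬ IsReal R' φ c} ≤ H := by
    have : δ ^ 3 * (#{c | ¬ IsReal R' φ c} : ℝ) ≤ δ ^ 3 * H := hσ.le.trans hH
    exact_mod_cast le_of_mul_le_mul_left this (by positivity)
  -- Distinct absorbers for the triples that are not edges, by Hall's theorem.
  obtain ⟨j, hj, hjS⟩ := (all_card_le_biUnion_card_iff_exists_injective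
    (fun k : {c // ¬ IsReal R' φ c} =>
      S.filter fun ω => Absorbs R k.1.1 (fun i => φ (k.1, i)) ω)).1 (by
    intro s
    rcases s.eq_empty_or_nonempty with rfl | ⟨k, hk⟩
    · simp
    · have h1 : #s ≤ H := (card_le_univ s).trans (by rwa [Fintype.card_subtype])
      exact h1.trans ((hSH k.1.1 fun i => φ (k.1, i)).trans
        (card_le_card (subset_biUnion_of_mem (fun k : {c // ¬ IsReal R' φ c} =>
      S.filter fun ω => Absorbs R k.1.1 (fun i => φ (k.1, i)) ω) hk))))
  have hjS1 : ∀ k, j k ∈ S := fun k => (mem_filter.1 (hjS k)).1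
  have hjA : ∀ k, Absorbs R k.1.1 (fun i => φ (k.1, i)) (j k) := fun k => (mem_filter.1 (hjS k)).2
  have hspec : ∀ c : C, ∃ g : Fin 3 → V, R c (g 0) (g 1) (g 2) ∧
      (∀ hc : c ∉ cols S, IsReal R' φ ⟨c, hc⟩ → ∀ i, g i = φ (⟨c, hc⟩, i)) ∧
      (∀ k : {c // ¬ IsReal R' φ c}, k.1.1 = c → ∀ i, g i = (j k).2 (i, 0)) ∧
      (∀ ω ∈ S, ∀ i, ω.1 i = c → g 1 = ω.2 (i, 1) ∧ g 2 = ω.2 (i, 2) ∧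
        (∀ k, j k = ω → g 0 = φ (k.1, i)) ∧ ((∀ k, j k ≠ ω) → g 0 = ω.2 (i, 0))) := by
    intro c
    by_cases hc : c ∈ cols S
    · obtain ⟨ω, hω, i, rfl⟩ := mem_cols.1 hc
      have huniq : ∀ ω' ∈ S, ∀ i', ω'.1 i' = ω.1 i → ω' = ω ∧ i' = i := fun ω' hω' i' he =>
        hS.col_inj ω' hω' ω hω i' i he
      by_cases hk : ∃ k, j k = ω
      · obtain ⟨k, rfl⟩ := hk
        refine ⟨![φ (k.1, i), (j k).2 (i, 1), (j k).2 (i, 2)], ((hjA k).2 i).2,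
          fun hc' => absurd hc hc', fun k' hk' => absurd hc (hk' ▸ k'.1.2), ?_⟩
        intro ω' hω' i' he
        obtain ⟨rfl, rfl⟩ := huniq ω' hω' i' he
        refine ⟨rfl, rfl, fun k' hk' => ?_, fun hne => absurd rfl (hne k)⟩
        rw [hj hk']
        rfl
      · push Not at hk
        refine ⟨![ω.2 (i, 0), ω.2 (i, 1), ω.2 (i, 2)], hS.edge ω hω i,
          fun hc' => absurd hc hc', fun k' hk' => absurd hc (hk' ▸ k'.1.2), ?_⟩
        intro ω' hω' i' he
        obtain ⟨rfl, rfl⟩ := huniq ω' hω' i' he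
        exact ⟨rfl, rfl, fun k' hk' => absurd hk' (hk k'), fun _ => rfl⟩
    · have hno : ∀ ω ∈ S, ∀ i, ω.1 i ≠ c := fun ω hω i he => hc (mem_cols.2 ⟨ω, hω, i, he⟩)
      by_cases hr : IsReal R' φ ⟨c, hc⟩
      · refine ⟨fun i => φ (⟨c, hc⟩, i), hr, fun _ _ _ => rfl, ?_,
          fun ω hω i he => absurd he (hno ω hω i)⟩
        rintro ⟨⟨c', hc'⟩, hk⟩ rfl
        exact absurd hr hk
      · refine ⟨fun i => (j ⟨⟨c, hc⟩, hr⟩).2 (i, 0), (hjA ⟨⟨c, hc⟩, hr⟩).1,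
          fun _ hr' => absurd hr' hr, ?_, fun ω hω i he => absurd he (hno ω hω i)⟩
        rintro ⟨⟨c', hc'⟩, hk⟩ rfl i
        rfl
  choose f hfR hfreal hfnon hfcol using hspec
  refine ⟨f, hfR, ?_⟩
  have hsurj : Function.Surjective fun y : C × Fin 3 => f y.1 y.2 := by
    intro v
    by_cases hv : v ∈ verts S
    · obtain ⟨ω, hω, ⟨i, l⟩, rfl⟩ := mem_verts.1 hv
      have h1 := hfcol (ω.1 i) ω hω i rfl
      fin_cases l
      · by_cases hk : ∃ k, j k = ω
        · obtain ⟨k, rfl⟩ := hk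
          exact ⟨(k.1.1, i), hfnon k.1.1 k rfl i⟩
        · push Not at hk
          exact ⟨(ω.1 i, 0), h1.2.2.2 hk⟩
      · exact ⟨(ω.1 i, 1), h1.1⟩
      · exact ⟨(ω.1 i, 2), h1.2.1⟩
    · obtain ⟨⟨⟨c, hc⟩, i⟩, rfl⟩ := hφs v hv
      by_cases hr : IsReal R' φ ⟨c, hc⟩
      · exact ⟨(c, i), hfreal c hc hr i⟩
      · exact ⟨((j ⟨⟨c, hc⟩, hr⟩).1 i, 0),
          (hfcol _ _ (hjS1 ⟨⟨c, hc⟩, hr⟩) i rfl).2.2.1 ⟨⟨c, hc⟩, hr⟩ rfl⟩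
  refine ((Fintype.bijective_iff_surjective_and_card _).2 ⟨hsurj, ?_⟩).1
  rw [Fintype.card_prod, Fintype.card_fin, hVC, mul_comm]

/-- Choice of the number `m` of absorbers for large `n`. -/
lemma exists_size (hδ : 0 < δ) (hδ1 : δ ≤ 1) (H : ℕ) :
    ∃ n₀ : ℕ, ∀ n : ℕ, n₀ ≤ n → ∃ m : ℕ, 216 * ((m : ℝ) + 1) ≤ δ ^ 6 * n ∧
      9 * (m : ℝ) ≤ δ / 8 * n ∧ (n : ℝ) ^ 4 * (1 - δ ^ 6 / 4) ^ m < (1 / 2) ^ H ∧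
      12 ≤ δ * n := by
  set γ : ℝ := δ ^ 6 / 432 with hγ
  set r : ℝ := 1 - δ ^ 6 / 4 with hr
  have hγ0 : 0 < γ := by positivity
  have hp : δ ^ 6 ≤ 1 := pow_le_one₀ hδ.le hδ1
  have hpδ : δ ^ 6 ≤ δ := by
    calc δ ^ 6 = δ ^ 5 * δ := by ring
      _ ≤ 1 * δ := by gcongr; exact pow_le_one₀ hδ.le hδ1
      _ = δ := one_mul _
  have hp0 : 0 < δ ^ 6 := by positivity
  have hr0 : 0 < r := by rw [hr]; linarith
  have hr1 : r < 1 := by rw [hr]; linarith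
  have hlim := tendsto_pow_const_mul_const_pow_of_abs_lt_one 4
    (r := r) (by rw [abs_of_pos hr0]; exact hr1)
  have hε : 0 < (1 / 2 : ℝ) ^ H * γ ^ 4 * r := by positivity
  obtain ⟨M, hM⟩ := Filter.eventually_atTop.1 (hlim.eventually (gt_mem_nhds hε))
  obtain ⟨n₀, hn₀⟩ := exists_nat_ge (((M : ℝ) + 1) / γ + 12 / δ + 1 / γ)
  refine ⟨n₀, fun n hn => ?_⟩
  have hn' : ((M : ℝ) + 1) / γ + 12 / δ + 1 / γ ≤ n := hn₀.trans (by exact_mod_cast hn)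
  have q1 : 0 < 12 / δ := by positivity
  have q2 : 0 < 1 / γ := by positivity
  have q3 : 0 ≤ ((M : ℝ) + 1) / γ := by positivity
  have h1 : (M : ℝ) + 1 ≤ γ * n := by
    rw [mul_comm, ← div_le_iff₀ hγ0]; linarith
  have h2 : 12 ≤ δ * n := by
    rw [mul_comm, ← div_le_iff₀ hδ]; linarith
  have h3 : 1 ≤ γ * n := by
    rw [mul_comm, ← div_le_iff₀ hγ0]; linarith
  have hn0 : (0 : ℝ) ≤ n := Nat.cast_nonneg _
  have hfl : (⌊γ * n⌋₊ : ℝ) ≤ γ * n := Nat.floor_le (by positivity)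
  have hlt : γ * n < ⌊γ * n⌋₊ + 1 := Nat.lt_floor_add_one _
  refine ⟨⌊γ * n⌋₊, ?_, ?_, ?_, h2⟩
  · rw [hγ] at h3 hfl ⊢
    linarith
  · have : γ * n ≤ δ / 72 * n := by
      rw [hγ]; exact mul_le_mul_of_nonneg_right (by linarith) hn0
    linarith
  · set m := ⌊γ * n⌋₊ with hm
    have hMm : M ≤ m + 1 := by
      have : (M : ℝ) < m + 1 := by linarith
      exact_mod_cast this.le
    have h4 := hM (m + 1) hMm
    push_cast at h4
    have h5 : (γ * n) ^ 4 * r ^ (m + 1) ≤ ((m : ℝ) + 1) ^ 4 * r ^ (m + 1) := by gcongr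
    have h6 : (γ ^ 4 * r) * ((n : ℝ) ^ 4 * r ^ m) < (γ ^ 4 * r) * (1 / 2) ^ H := by
      calc _ = (γ * n) ^ 4 * r ^ (m + 1) := by ring
        _ < (1 / 2 : ℝ) ^ H * γ ^ 4 * r := h5.trans_lt h4
        _ = _ := by ring
    exact lt_of_mul_lt_mul_left h6 (by positivity)

end absorption

/-! ### From 3-graphs to ordered relations -/

section hypergraph
variable {V : Type*} [Fintype V]

/-- The ordered edge relation of a 3-graph given by its set of edges. -/
def rel (E : Finset (Finset V)) (u v w : V) : Prop :=
  u ≠ v ∧ u ≠ w ∧ v ≠ w ∧ ({u, v, w} : Finset V) ∈ E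

lemma rel.swap_left {E : Finset (Finset V)} {u v w : V} (h : rel E u v w) : rel E v u w := by
  obtain ⟨h1, h2, h3, h4⟩ := h
  refine ⟨h1.symm, h3, h2, ?_⟩
  rwa [insert_comm]

lemma rel.swap_right {E : Finset (Finset V)} {u v w : V} (h : rel E u v w) : rel E u w v := by
  obtain ⟨h1, h2, h3, h4⟩ := h
  refine ⟨h2, h1, h3.symm, ?_⟩
  rwa [pair_comm w v]

lemma exists_triple {e : Finset V} (he : #e = 3) {u : V} (hu : u ∈ e) :
    ∃ v w, u ≠ v ∧ u ≠ w ∧ v ≠ w ∧ e = {u, v, w} := by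
  have h1 : #(e.erase u) = 2 := by rw [card_erase_of_mem hu, he]
  obtain ⟨v, w, hvw, h2⟩ := card_eq_two.1 h1
  have hv : v ∈ e.erase u := by simp [h2]
  have hw : w ∈ e.erase u := by simp [h2]
  exact ⟨v, w, (mem_erase.1 hv).1.symm, (mem_erase.1 hw).1.symm, hvw, by
    rw [← h2, insert_erase hu]⟩

lemma two_mul_degree_le {E : Finset (Finset V)} (hE : ∀ e ∈ E, #e = 3) (u : V) :
    2 * #{e ∈ E | u ∈ e} ≤ linkCard (rel E) u := by
  have hmap : ∀ p ∈ (univ.filter fun p : V × V => rel E u p.1 p.2),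
      ({u, p.1, p.2} : Finset V) ∈ E.filter fun e => u ∈ e := by
    intro p hp
    exact mem_filter.2 ⟨(mem_filter.1 hp).2.2.2.2, by simp⟩
  rw [linkCard, card_eq_sum_card_fiberwise hmap, mul_comm, ← smul_eq_mul]
  refine card_nsmul_le_sum _ _ _ fun e he => ?_
  obtain ⟨heE, hue⟩ := mem_filter.1 he
  obtain ⟨v, w, h1, h2, h3, rfl⟩ := exists_triple (hE e heE) hue
  have hr : rel E u v w := ⟨h1, h2, h3, heE⟩
  have hsub : ({(v, w), (w, v)} : Finset (V × V)) ⊆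
      {p ∈ univ.filter fun p : V × V => rel E u p.1 p.2 |
        ({u, p.1, p.2} : Finset V) = {u, v, w}} := by
    intro p hp
    rcases mem_insert.1 hp with rfl | hp
    · simp [hr]
    · obtain rfl := mem_singleton.1 hp
      simp [hr.swap_right, pair_comm]
  refine le_trans (le_of_eq ?_) (card_le_card hsub)
  rw [card_pair]
  intro h
  exact h3 (Prod.ext_iff.1 h).1

end hypergraph

/-- A large Ore family with three vertices per colour has a perfect rainbow matching. -/
lemma exists_rainbow {δ : ℝ} (hδ : 0 < δ) (hδ1 : δ ≤ 1) :
    ∃ n₀ : ℕ, ∀ (C V : Type) [Fintype C] [Fintype V] [Nonempty C],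
      n₀ ≤ Fintype.card V → Fintype.card V = 3 * Fintype.card C →
      ∀ R : C → V → V → V → Prop, Ore δ R →
      ∃ f : C → Fin 3 → V, (∀ c, R c (f c 0) (f c 1) (f c 2)) ∧
        Function.Injective fun y : C × Fin 3 => f y.1 y.2 := by
  obtain ⟨H, hH⟩ := exists_nat_ge (10 ^ 9 / δ ^ 3)
  obtain ⟨n₀, hn₀⟩ := exists_size hδ hδ1 H
  refine ⟨n₀, fun C V _ _ _ hV hVC R hR => ?_⟩
  obtain ⟨m, h1, h2, h3, h4⟩ := hn₀ _ hV
  obtain ⟨S, hS, hSm, hSH⟩ := exists_family hδ hR hVC h1 h3 hδ1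
  refine assemble hδ hδ1 hR hVC h4 hS (by rw [hSm]; exact h2) ?_ hSH
  rw [mul_comm, ← div_le_iff₀ (by positivity)]
  exact hH

end RainbowOre

open RainbowOre

/-- For any `δ > 0` there is `n₀` such that for all `n ≥ n₀`
divisible by 3: if `F 1, …, F (n/3)` are 3-graphs on a common `n`-vertex set,
each without isolated vertices, and in each `F i` adjacent vertices have degree
sum `> (2/3 + δ)n²`, then the family admits a rainbow matching. -/
theorem stmt_1 (δ : ℝ) (hδ : 0 < δ) :
    ∃ n₀ : ℕ, ∀ n : ℕ, n₀ ≤ n → 3 ∣ n →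
    ∀ F : Fin (n / 3) → Finset (Finset (Fin n)),
      (∀ i, ∀ e ∈ F i, e.card = 3) →
      (∀ i, ∀ v : Fin n, ∃ e ∈ F i, v ∈ e) →
      (∀ i, ∀ u v : Fin n, u ≠ v → (∃ e ∈ F i, u ∈ e ∧ v ∈ e) →
        ((((F i).filter (fun e => u ∈ e)).card
          + ((F i).filter (fun e => v ∈ e)).card : ℝ) > (2 / 3 + δ) * (n : ℝ) ^ 2)) →
      ∃ f : Fin (n / 3) → Finset (Fin n),
        (∀ i, f i ∈ F i) ∧ ∀ i j, i ≠ j → Disjoint (f i) (f j) := by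
  -- The hypotheses get weaker as `δ` decreases, so `δ` may be assumed to be at most `1`.
  obtain ⟨n₀, hn₀⟩ := exists_rainbow (δ := min δ 1) (lt_min hδ one_pos) (min_le_right _ _)
  refine ⟨n₀ + 3, fun n hn h3 F hcard hiso hdeg => ?_⟩
  have hpos : 0 < n / 3 := Nat.div_pos (by omega) (by norm_num)
  have : Nonempty (Fin (n / 3)) := ⟨⟨0, hpos⟩⟩
  obtain ⟨f, hf, hinj⟩ := hn₀ (Fin (n / 3)) (Fin n) (by rw [Fintype.card_fin]; omega)
    (by rw [Fintype.card_fin, Fintype.card_fin]; omega) (fun i => rel (F i))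
    { swap_left := fun _ _ _ _ h => h.swap_left
      swap_right := fun _ _ _ _ h => h.swap_right
      exists_edge := by
        intro i u
        obtain ⟨e, he, hu⟩ := hiso i u
        obtain ⟨v, w, h1, h2, h3, rfl⟩ := exists_triple (hcard i e he) hu
        refine ⟨v, w, h1, h2, h3, ?_⟩
        convert he
      sum_gt := by
        intro i u v w h
        have hE := two_mul_degree_le (hcard i)
        have h1 := hdeg i u v h.1 ⟨_, h.2.2.2, by simp, by simp⟩
        have h2 : (2 : ℝ) * ((F i).filter (fun e => u ∈ e)).card ≤ linkCard (rel (F i)) u := by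
          have := hE u
          refine le_trans (le_of_eq ?_) (Nat.cast_le.2 this)
          push_cast
          congr!
        have h3 : (2 : ℝ) * ((F i).filter (fun e => v ∈ e)).card ≤ linkCard (rel (F i)) v := by
          have := hE v
          refine le_trans (le_of_eq ?_) (Nat.cast_le.2 this)
          push_cast
          congr!
        have h4 : (2 / 3 + min δ 1) * (n : ℝ) ^ 2 ≤ (2 / 3 + δ) * (n : ℝ) ^ 2 := by
          gcongr
          exact min_le_left _ _
        rw [Fintype.card_fin]
        linarith }
  refine ⟨fun i => {f i 0, f i 1, f i 2}, fun i => ?_, fun i j hij => ?_⟩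
  · convert (hf i).2.2.2
  · have hne : ∀ a b, f i a ≠ f j b := fun a b h =>
      hij (congrArg Prod.fst (@hinj (i, a) (j, b) h))
    rw [Finset.disjoint_left]
    intro x hx hx'
    simp only [Finset.mem_insert, Finset.mem_singleton] at hx hx'
    rcases hx with rfl | rfl | rfl <;> rcases hx' with h | h | h <;> exact hne _ _ h
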